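/- arXiv:1403.7342 — 3 statements merged into one kernel-verified Lean document; each statement's English description precedes it below -/
import Mathlib

section
/- Let ψ : P⁻¹ℤ → ℝ_{≥0} satisfy ψ(γ) ≤ 1/(2 L(γ)) for all γ. Then the set ℰ(ψ) of those x ∈ ℤ_P such that d(γ·x, ι(β)) ≤ ψ(γ) for infinitely many coprime pairs β, γ ∈ P⁻¹ℤ has measure λ(ℰ(ψ)) equal to 0 or 1. -/
open MeasureTheory Filter Set

noncomputable section

/-- Borel measurable structure on `ℚ_[q]`. -/
instance (q : ℕ) [Fact q.Prime] : MeasurableSpace ℚ_[q] := borel _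
instance (q : ℕ) [Fact q.Prime] : BorelSpace ℚ_[q] := ⟨rfl⟩

/-- The normalized Haar measure on `ℚ_[q]`, giving the unit ball `ℤ_[q]` measure 1. -/
def padicHaar (q : ℕ) [Fact q.Prime] : Measure ℚ_[q] :=
  Measure.addHaarMeasure
    ⟨⟨Metric.closedBall 0 1, isCompact_closedBall 0 1⟩,
      ⟨0, mem_interior_iff_mem_nhds.2 (Metric.closedBall_mem_nhds 0 one_pos)⟩⟩

variable (r : ℕ) (p : Fin r → ℕ) [∀ i, Fact (p i).Prime]

/-- The space `ℚ_P = ℝ × ℚ_{p_1} × ⋯ × ℚ_{p_r}`. -/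
abbrev QP : Type := ℝ × ((i : Fin r) → ℚ_[p i])

/-- `P⁻¹ℤ = { n p_1^{ν_1} ⋯ p_r^{ν_r} : n, ν_i ∈ ℤ }`, as a set of rationals. -/
def PinvZ : Set ℚ :=
  {q : ℚ | ∃ (n : ℤ) (ν : Fin r → ℤ), q = (n : ℚ) * ∏ i, (p i : ℚ) ^ (ν i)}

/-- The diagonal embedding `ι : ℚ → ℚ_P`. -/
def iota (q : ℚ) : QP r p := ((q : ℝ), fun i => (q : ℚ_[p i]))

/-- Coordinatewise multiplication of `x ∈ ℚ_P` by a rational number `γ`. -/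
def smulQ (γ : ℚ) (x : QP r p) : QP r p :=
  ((γ : ℝ) * x.1, fun i => (γ : ℚ_[p i]) * x.2 i)

/-- The distance `d(x,y) = max_{p ∈ P} |x_p - y_p|_p` on `ℚ_P`. -/
def dP (x y : QP r p) : ℝ :=
  max |x.1 - y.1| (⨆ i, ‖x.2 i - y.2 i‖)

/-- The level `ℓ(γ) = max_{p ∈ P} |γ|_p` of a rational number `γ`. -/
def lev (γ : ℚ) : ℝ :=
  max |(γ : ℝ)| (⨆ i, ‖(γ : ℚ_[p i])‖)

/-- `L(γ) = max_{p ∈ P} (|γ|_∞ |γ|_{p_1} ⋯ |γ|_{p_r}) / |γ|_p` (which equals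
`max_{p ∈ P} n/|γ|_p` for `γ = n p_1^{ν_1} ⋯ p_r^{ν_r}` with `n ∈ ℕ` coprime to the `p i`). -/
def LP (γ : ℚ) : ℝ :=
  max ((|(γ : ℝ)| * ∏ i, ‖(γ : ℚ_[p i])‖) / |(γ : ℝ)|)
    (⨆ i, (|(γ : ℝ)| * ∏ j, ‖(γ : ℚ_[p j])‖) / ‖(γ : ℚ_[p i])‖)

/-- The fundamental domain `ℤ_P = [0,1) × ℤ_{p_1} × ⋯ × ℤ_{p_r}`. -/
def ZP : Set (QP r p) :=
  {x : QP r p | x.1 ∈ Set.Ico (0 : ℝ) 1 ∧ ∀ i, ‖x.2 i‖ ≤ 1}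

/-- The measure `λ` on `ℚ_P`: the product of Lebesgue measure on `ℝ` and the
normalized Haar measures on the `ℚ_{p_i}`. -/
def lamP : Measure (QP r p) :=
  (volume : Measure ℝ).prod (Measure.pi fun i => padicHaar (p i))

/-- Two elements of `P⁻¹ℤ` are coprime if they admit decompositions
`β = m p_1^{μ_1} ⋯ p_r^{μ_r}`, `γ = n p_1^{ν_1} ⋯ p_r^{ν_r}` with `m, n` coprime to all the
`p i` and `gcd(m,n) = 1`. -/
def CoprimePair (β γ : ℚ) : Prop :=
  ∃ (m n : ℤ) (μ ν : Fin r → ℤ),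
    β = (m : ℚ) * ∏ i, (p i : ℚ) ^ (μ i) ∧
    γ = (n : ℚ) * ∏ i, (p i : ℚ) ^ (ν i) ∧
    (∀ i, ¬ ((p i : ℤ) ∣ m)) ∧ (∀ i, ¬ ((p i : ℤ) ∣ n)) ∧ IsCoprime m n

/-- For nonzero `γ = n p_1^{ν_1} ⋯ p_r^{ν_r} ∈ P⁻¹ℤ` with `n ∈ ℕ` coprime to the `p i`,
`unitPart γ = n`: the positive integer obtained from `γ` by removing all powers of the `p i`. -/
def unitPart (γ : ℚ) : ℕ :=
  (γ.num.natAbs * γ.den) / ∏ i, (p i) ^ ((γ.num.natAbs * γ.den).factorization (p i))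

/-- The summand `φ(n) ψ(γ)^{r+1} / n`, where `γ = n p_1^{ν_1} ⋯ p_r^{ν_r}` with `n ∈ ℕ`
coprime to the `p i` and `φ` is Euler's totient function. -/
def dsWeight (ψ : ℚ → ℝ) (γ : ℚ) : ℝ :=
  (Nat.totient (unitPart r p γ) : ℝ) * ψ γ ^ (r + 1) / (unitPart r p γ : ℝ)

/-- The set `𝒜(ψ)` of `x ∈ ℤ_P` such that `d(γ·x, ι(β)) < ψ(γ)` for infinitely many coprime
pairs `β, γ ∈ P⁻¹ℤ`. -/
def Apsi (ψ : ℚ → ℝ) : Set (QP r p) :=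
  {x : QP r p | x ∈ ZP r p ∧
    {bg : ℚ × ℚ | bg.1 ∈ PinvZ r p ∧ bg.2 ∈ PinvZ r p ∧ CoprimePair r p bg.1 bg.2 ∧
      dP r p (smulQ r p bg.2 x) (iota r p bg.1) < ψ bg.2}.Infinite}

/-- The set `ℰ(ψ)` of `x ∈ ℤ_P` such that `d(γ·x, ι(β)) ≤ ψ(γ)` for infinitely many coprime
pairs `β, γ ∈ P⁻¹ℤ`. -/
def Epsi (ψ : ℚ → ℝ) : Set (QP r p) :=
  {x : QP r p | x ∈ ZP r p ∧
    {bg : ℚ × ℚ | bg.1 ∈ PinvZ r p ∧ bg.2 ∈ PinvZ r p ∧ CoprimePair r p bg.1 bg.2 ∧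
      dP r p (smulQ r p bg.2 x) (iota r p bg.1) ≤ ψ bg.2}.Infinite}

/-- The union of boxes
`⋃_{a=1, (a,m)=1}^{m} B_∞(a/m, ρ/(m p_1^{μ_1} ⋯ p_r^{μ_r})) × ∏_i B_{p_i}(a/m, p_i^{μ_i} ρ)`,
associated to `β = m p_1^{μ_1} ⋯ p_r^{μ_r}` and radius parameter `ρ = ψ(β)`. -/
def Abox (m : ℕ) (μ : Fin r → ℤ) (ρ : ℝ) : Set (QP r p) :=
  ⋃ a ∈ Finset.filter (fun a => Nat.Coprime a m) (Finset.Icc 1 m),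
    {x : QP r p |
      x.1 ∈ Metric.ball ((a : ℝ) / (m : ℝ)) (ρ / ((m : ℝ) * ∏ i, (p i : ℝ) ^ (μ i))) ∧
      ∀ i, x.2 i ∈ Metric.ball ((((a : ℚ) / (m : ℚ)) : ℚ_[p i])) ((p i : ℝ) ^ (μ i) * ρ)}

/-- A box in `ℚ_P`: a product of a ball from each of the constituent spaces. -/
def IsBox (S : Set (QP r p)) : Prop :=
  ∃ (c : ℝ) (ρ : ℝ) (cp : (i : Fin r) → ℚ_[p i]) (ρp : Fin r → ℝ),
    S = {x : QP r p | x.1 ∈ Metric.ball c ρ ∧ ∀ i, x.2 i ∈ Metric.ball (cp i) (ρp i)}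

end

open Topology

instance lamP_haar_i (q : ℕ) [Fact q.Prime] : (padicHaar q).IsAddHaarMeasure := by
  unfold padicHaar; infer_instance
instance lamP_haar (r : ℕ) (p : Fin r → ℕ) [∀ i, Fact (p i).Prime] : (lamP r p).IsAddHaarMeasure := by
  unfold lamP; infer_instance

lemma aeconst_dense {G : Type*} [AddCommGroup G] [TopologicalSpace G] [IsTopologicalAddGroup G]
    [SecondCountableTopology G] [MeasurableSpace G] [BorelSpace G] [R1Space G] [LocallyCompactSpace G]
    (μ : Measure G) [μ.IsAddHaarMeasure] [SigmaFinite μ] [μ.InnerRegularCompactLTTop]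
    {s : Set G} (hs : MeasurableSet s) (T : Set G) (hT : Dense T)
    (h : ∀ g ∈ T, ∀ᵐ x ∂μ, g + x ∈ s → x ∈ s) : μ s = 0 ∨ μ sᶜ = 0 := by
  have key : ∀ g : G, ∀ᵐ x ∂μ, g + x ∈ s → x ∈ s := by
    intro g
    have h1 : ∀ n, μ {x | g + x ∈ s ∩ spanningSets μ n ∧ x ∉ s} = 0 := by
      intro n
      set t := s ∩ spanningSets μ n with ht
      have htm : MeasurableSet t := hs.inter (measurableSet_spanningSets μ n)
      have htf : μ t ≠ ⊤ := ((measure_mono inter_subset_right).trans_lt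
        (measure_spanningSets_lt_top μ n)).ne
      let f : C(G × G, G) := ⟨fun x => x.1 + x.2, continuous_add⟩
      have hlim := tendsto_measure_symmDiff_preimage_nhds_zero (μ := μ) (ν := μ)
        (l := 𝓝[T] g) (f := f.curry) (g := f.curry g) (s := t)
        ((f.curry.continuous.tendsto g).mono_left nhdsWithin_le_nhds)
        (Eventually.of_forall fun a => measurePreserving_add_left μ a)
        (measurePreserving_add_left μ g) htm.nullMeasurableSet htf
      have : (𝓝[T] g).NeBot := mem_closure_iff_nhdsWithin_neBot.1 (hT g)
      refine le_antisymm (ge_of_tendsto hlim ?_) zero_le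
      filter_upwards [self_mem_nhdsWithin] with a ha
      have h2 : μ {x | ¬ (a + x ∈ s → x ∈ s)} = 0 := h a ha
      refine (measure_mono (t := symmDiff (⇑(f.curry a) ⁻¹' t) (⇑(f.curry g) ⁻¹' t) ∪ {x | ¬ (a + x ∈ s → x ∈ s)}) ?_).trans
        ((measure_union_le _ _).trans (by rw [h2, add_zero]))
      rintro x ⟨hx1, hx2⟩
      by_cases hax : a + x ∈ s
      · right; simp [hax, hx2]
      · left; right
        exact ⟨hx1, fun h' => hax h'.1⟩
    have h2 : μ (⋃ n, {x | g + x ∈ s ∩ spanningSets μ n ∧ x ∉ s}) = 0 := measure_iUnion_null h1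
    refine measure_mono_null ?_ h2
    intro x hx
    simp only [mem_compl_iff, mem_ofPred_eq, Classical.not_imp] at hx
    have : g + x ∈ ⋃ n, spanningSets μ n := by rw [iUnion_spanningSets]; trivial
    obtain ⟨n, hn⟩ := mem_iUnion.1 this
    exact mem_iUnion.2 ⟨n, ⟨hx.1, hn⟩, hx.2⟩
  have : EventuallyConst s (ae μ) := by
    refine aeconst_of_forall_preimage_vadd_ae_eq G hs.nullMeasurableSet ?_
    intro g
    have h1 := key g
    have h2 := (measurePreserving_add_left μ g).quasiMeasurePreserving.ae (key (-g))
    refine eventuallyEq_set.2 ?_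
    filter_upwards [h1, h2] with x hx1 hx2
    exact ⟨fun h' => hx1 h', fun h' => hx2 (by simpa using h')⟩
  rcases eventuallyConst_set.1 this with h | h
  · right; exact h
  · left; rw [← compl_mem_ae_iff]; exact h


lemma cassels_real (P : ℕ → ℝ → ℝ → Prop) (hP : ∀ n b ρ, P n b ρ → ρ ≤ 1 / (n : ℝ)) (c : ℝ)
    (hc : 1 ≤ c) :
    volume {x : ℝ | (∃ᶠ n in atTop, ∃ b ρ, P n b ρ ∧ |x - b| ≤ c * ρ) ∧
      ¬ (∃ᶠ n in atTop, ∃ b ρ, P n b ρ ∧ |x - b| ≤ ρ)} = 0 := by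
  set A : ℕ → Set ℝ := fun N => {x | (∃ᶠ n in atTop, ∃ b ρ, P n b ρ ∧ |x - b| ≤ c * ρ) ∧
    ∀ n ≥ N, ∀ b ρ, P n b ρ → ¬ |x - b| ≤ ρ} with hA
  have hsub : {x : ℝ | (∃ᶠ n in atTop, ∃ b ρ, P n b ρ ∧ |x - b| ≤ c * ρ) ∧
      ¬ (∃ᶠ n in atTop, ∃ b ρ, P n b ρ ∧ |x - b| ≤ ρ)} ⊆ ⋃ N, A N := by
    rintro x ⟨h1, h2⟩
    rw [not_frequently, eventually_atTop] at h2
    obtain ⟨N, hN⟩ := h2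
    refine mem_iUnion.2 ⟨N, h1, fun n hn b ρ hp hx => hN n hn ⟨b, ρ, hp, hx⟩⟩
  refine measure_mono_null hsub (measure_iUnion_null fun N => ?_)
  by_contra hne
  have hd := Besicovitch.ae_tendsto_measure_inter_div volume (A N)
  rw [ae_iff] at hd
  have hd' := le_antisymm ((Measure.le_restrict_apply (μ := volume) (A N) _).trans hd.le) zero_le
  obtain ⟨x, hxA, hx⟩ : ∃ x ∈ A N, Tendsto (fun r => volume (A N ∩ Metric.closedBall x r) /
      volume (Metric.closedBall x r)) (𝓝[>] 0) (𝓝 1) := by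
    by_contra! hcon
    refine hne (measure_mono_null (fun x hx => ?_) hd')
    exact ⟨hcon x hx, hx⟩
  have hlt : ENNReal.ofReal (c / (c + 1)) < 1 := by
    rw [← ENNReal.ofReal_one]
    apply (ENNReal.ofReal_lt_ofReal_iff one_pos).2
    rw [div_lt_one (by linarith)]; linarith
  have hev := hx.eventually (lt_mem_nhds hlt)
  rw [eventually_nhdsWithin_iff, Metric.eventually_nhds_iff] at hev
  obtain ⟨δ, hδ, hev⟩ := hev
  obtain ⟨M, hM⟩ := exists_nat_gt ((c + 1) / δ)
  obtain ⟨n, hn, b, ρ, hp, hb⟩ := (frequently_atTop.1 hxA.1) (max N (M + 1))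
  have hnot := hxA.2 n (le_trans (le_max_left _ _) hn) b ρ hp
  have hρ : 0 < ρ := by
    by_contra! hρ
    apply hnot
    have := abs_nonneg (x - b)
    nlinarith
  have hnM : (M : ℝ) + 1 ≤ n := by exact_mod_cast le_trans (le_max_right _ _) hn
  have hMn : (c + 1) * ρ < δ := by
    have h1 := hP n b ρ hp
    have hM0 : (0:ℝ) ≤ M := Nat.cast_nonneg M
    have hn0 : (0:ℝ) < n := by linarith
    rw [le_div_iff₀ hn0] at h1
    rw [div_lt_iff₀ hδ] at hM
    have : (c + 1) * (ρ * n) < n * δ := by nlinarith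
    nlinarith
  have hr0 : 0 < (c + 1) * ρ := by positivity
  have h3 := hev (y := (c + 1) * ρ) (by rw [Real.dist_eq, sub_zero, abs_of_pos hr0]; exact hMn) hr0
  have h4 : A N ∩ Metric.closedBall x ((c + 1) * ρ) ⊆
      Metric.closedBall x ((c + 1) * ρ) \ Metric.closedBall b ρ := by
    rintro y ⟨hy1, hy2⟩
    refine ⟨hy2, fun hy3 => hy1.2 n (le_trans (le_max_left _ _) hn) b ρ hp ?_⟩
    simpa [Real.dist_eq] using hy3
  have h5 : Metric.closedBall b ρ ⊆ Metric.closedBall x ((c + 1) * ρ) := by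
    intro y hy
    rw [Metric.mem_closedBall, Real.dist_eq] at *
    calc |y - x| ≤ |y - b| + |x - b| := by
          rw [abs_sub_comm x b]; exact abs_sub_le _ _ _
      _ ≤ _ := by linarith
  have h6 : volume (A N ∩ Metric.closedBall x ((c + 1) * ρ)) ≤ ENNReal.ofReal (2 * (c * ρ)) := by
    refine (measure_mono h4).trans ?_
    rw [measure_sdiff h5 (measurableSet_closedBall.nullMeasurableSet) (by rw [Real.volume_closedBall]; exact ENNReal.ofReal_ne_top)]
    rw [Real.volume_closedBall, Real.volume_closedBall, ← ENNReal.ofReal_sub _ (by positivity)]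
    apply ENNReal.ofReal_le_ofReal; linarith
  rw [Real.volume_closedBall] at h3
  have h7 := h3.trans_le (ENNReal.div_le_div_right h6 _)
  rw [← ENNReal.ofReal_div_of_pos (by positivity)] at h7
  have : 2 * (c * ρ) / (2 * ((c + 1) * ρ)) = c / (c + 1) := by field_simp
  rw [this] at h7
  exact lt_irrefl _ h7

section
variable (r : ℕ) (p : Fin r → ℕ) [∀ i, Fact (p i).Prime]

def QQ : ℕ := ∏ i, p i

lemma QQ_pos : 0 < QQ r p := Finset.prod_pos fun i _ => (Fact.out : (p i).Prime).pos

lemma QQ_ne : (QQ r p : ℚ) ≠ 0 := by exact_mod_cast (QQ_pos r p).ne'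

lemma dvd_QQ (i) : p i ∣ QQ r p := Finset.dvd_prod_of_mem _ (Finset.mem_univ i)

lemma iota_add (a b : ℚ) : iota r p (a + b) = iota r p a + iota r p b := by
  ext <;> simp [iota]

lemma iota_neg (a : ℚ) : iota r p (-a) = -iota r p a := by
  ext <;> simp [iota]

lemma smulQ_add (a : ℚ) (x y : QP r p) : smulQ r p a (x + y) = smulQ r p a x + smulQ r p a y := by
  ext <;> simp [smulQ, mul_add]

lemma smulQ_iota (a b : ℚ) : smulQ r p a (iota r p b) = iota r p (a * b) := by
  ext <;> simp [smulQ, iota]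

lemma smulQ_smulQ (a b : ℚ) (x : QP r p) : smulQ r p a (smulQ r p b x) = smulQ r p (a * b) x := by
  ext <;> simp [smulQ, mul_assoc]

def Ctr (n : ℕ) (z : ℚ) : Prop :=
  0 < n ∧ n.Coprime (QQ r p) ∧ ∃ (k : ℤ) (N : ℕ), IsCoprime k (n : ℤ) ∧
    z = k / (n * (QQ r p : ℚ) ^ N)

variable {r p}

lemma ctr_cop {n : ℕ} (h : n.Coprime (QQ r p)) (M : ℕ) :
    IsCoprime ((QQ r p : ℤ) ^ M) (n : ℤ) :=
  IsCoprime.pow_left (Nat.isCoprime_iff_coprime.2 h.symm)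

lemma ctr_add {n : ℕ} {z : ℚ} (h : Ctr r p n z) (c : ℤ) (M : ℕ) :
    Ctr r p n (z + c / (QQ r p : ℚ) ^ M) := by
  obtain ⟨h0, hQ, k, N, hk, rfl⟩ := h
  refine ⟨h0, hQ, k * (QQ r p : ℤ) ^ M + (n : ℤ) * (c * (QQ r p : ℤ) ^ N), N + M, ?_, ?_⟩
  · exact (IsCoprime.mul_left hk (ctr_cop hQ M)).add_mul_left_left _
  · have := QQ_ne r p
    have h0' : (n : ℚ) ≠ 0 := by exact_mod_cast h0.ne'
    push_cast
    field_simp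
    ring

lemma ctr_mul {n q : ℕ} {z : ℚ} (h : Ctr r p n z) (hq : q.Coprime n) :
    Ctr r p n (q * z) := by
  obtain ⟨h0, hQ, k, N, hk, rfl⟩ := h
  refine ⟨h0, hQ, q * k, N, IsCoprime.mul_left (Nat.isCoprime_iff_coprime.2 hq) hk, ?_⟩
  push_cast
  ring

lemma ctr_ii {n' q : ℕ} {z : ℚ} (h : Ctr r p (q * n') z) (hq : q.Coprime n')
    (hqQ : q.Coprime (QQ r p)) :
    Ctr r p (q * n') (q * z + 1 / q) := by
  obtain ⟨h0, hQ, k, N, hk, rfl⟩ := h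
  have hq0 : 0 < q := Nat.pos_of_mul_pos_right h0
  have hn0 : 0 < n' := Nat.pos_of_mul_pos_left h0
  refine ⟨h0, hQ, q * k + n' * (QQ r p : ℤ) ^ N, N, ?_, ?_⟩
  · push_cast at hk ⊢
    have hk1 := IsCoprime.of_mul_right_left hk
    have hk2 := IsCoprime.of_mul_right_right hk
    have hqn : IsCoprime (q : ℤ) n' := Nat.isCoprime_iff_coprime.2 hq
    refine IsCoprime.mul_right ?_ ?_
    · rw [add_comm]
      exact (IsCoprime.mul_left hqn.symm (ctr_cop hqQ N)).add_mul_left_left _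
    · exact (IsCoprime.mul_left hqn hk2).add_mul_left_left _
  · have := QQ_ne r p
    have h0' : (q : ℚ) ≠ 0 := by exact_mod_cast hq0.ne'
    have h1' : (n' : ℚ) ≠ 0 := by exact_mod_cast hn0.ne'
    push_cast
    field_simp

lemma ctr_iii {n q : ℕ} {z : ℚ} (h : Ctr r p n z) (hq : q * q ∣ n) (c : ℤ) (M : ℕ) :
    Ctr r p n (z + c / (q * (QQ r p : ℚ) ^ M)) := by
  obtain ⟨h0, hQ, k, N, hk, rfl⟩ := h
  obtain ⟨m, rfl⟩ := hq
  have hq0 : 0 < q := by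
    rcases Nat.eq_zero_or_pos q with h | h
    · simp [h] at h0
    · exact h
  have hn0 : 0 < m := Nat.pos_of_mul_pos_left h0
  refine ⟨h0, hQ, k * (QQ r p : ℤ) ^ M + (q * m : ℤ) * (c * (QQ r p : ℤ) ^ N), N + M, ?_, ?_⟩
  · have h1 : IsCoprime (k * (QQ r p : ℤ) ^ M) (q * m : ℤ) := by
      refine IsCoprime.of_isCoprime_of_dvd_right (IsCoprime.mul_left hk (ctr_cop hQ M)) ?_
      exact ⟨q, by push_cast; ring⟩
    have h2 := h1.add_mul_left_left (c * (QQ r p : ℤ) ^ N)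
    refine IsCoprime.of_isCoprime_of_dvd_right (IsCoprime.mul_right h2 h2) ?_
    exact ⟨m, by push_cast; ring⟩
  · have := QQ_ne r p
    have h0' : (q : ℚ) ≠ 0 := by exact_mod_cast hq0.ne'
    have h1' : (m : ℚ) ≠ 0 := by exact_mod_cast hn0.ne'
    push_cast
    field_simp
    ring

lemma norm_cop {D : ℕ} (h : D.Coprime (QQ r p)) (i : Fin r) : ‖(D : ℚ_[p i])‖ = 1 := by
  rw [Padic.norm_natCast_eq_one_iff]
  exact (h.coprime_dvd_right (dvd_QQ r p i)).symm

lemma norm_QQ_le (i : Fin r) : ‖(QQ r p : ℚ_[p i])‖ ≤ ‖(p i : ℚ_[p i])‖ := by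
  obtain ⟨m, hm⟩ := dvd_QQ r p i
  rw [hm]; push_cast; rw [norm_mul]
  have := Padic.norm_int_le_one (p := p i) (m : ℤ)
  push_cast at this
  exact mul_le_of_le_one_right (norm_nonneg _) this

lemma norm_QQ_lt (i : Fin r) : ‖(QQ r p : ℚ_[p i])‖ < 1 :=
  (norm_QQ_le i).trans_lt Padic.norm_p_lt_one

lemma QQ_ne_padic (i : Fin r) : (QQ r p : ℚ_[p i]) ≠ 0 := by
  exact_mod_cast (QQ_pos r p).ne'

lemma crt_approx (hinj : Function.Injective p) (y : (i : Fin r) → ℚ_[p i]) (hy : ∀ i, ‖y i‖ ≤ 1)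
    (N : ℕ) : ∃ a : ℕ, ∀ i, ‖y i - a‖ ≤ ‖(p i : ℚ_[p i])‖ ^ N := by
  let Y : (i : Fin r) → ℤ_[p i] := fun i => ⟨y i, hy i⟩
  obtain ⟨a, ha⟩ := Nat.chineseRemainderOfFinset (fun i => (Y i).appr N) (fun i => p i ^ N)
    Finset.univ (fun i _ => pow_ne_zero _ (Fact.out : (p i).Prime).ne_zero)
    (fun i _ j _ hij => Nat.Coprime.pow _ _ ((Nat.coprime_primes Fact.out Fact.out).2
      (fun h => hij (hinj h))))
  refine ⟨a, fun i => ?_⟩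
  have h1 := ha i (Finset.mem_univ i)
  have h2 := PadicInt.appr_spec N (Y i)
  have h3 : (((Y i).appr N : ℤ_[p i]) - a) ∈ (Ideal.span {(p i : ℤ_[p i]) ^ N}) := by
    rw [Ideal.mem_span_singleton]
    obtain ⟨t, ht⟩ := (Nat.modEq_iff_dvd.1 h1)
    refine ⟨t, ?_⟩
    have : (((((Y i).appr N : ℕ) : ℤ) - (a : ℤ) : ℤ) : ℤ_[p i]) = ((p i ^ N : ℕ) : ℤ) * t := by
      rw [ht]; push_cast; ring
    push_cast at this
    exact this
  have h4 := add_mem h2 h3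
  rw [← PadicInt.norm_le_pow_iff_mem_span_pow] at h4
  have h5 : ‖y i - a‖ = ‖Y i - (Y i).appr N + ((Y i).appr N - (a : ℤ_[p i]))‖ := by
    rw [PadicInt.norm_def]
    push_cast
    congr 1
    simp [Y]
  rw [h5, Padic.norm_p]
  refine h4.trans (le_of_eq ?_)
  rw [zpow_neg, inv_pow, zpow_natCast]

lemma dense_T (hinj : Function.Injective p) (𝒟 : Set ℕ) (hD : ∀ D ∈ 𝒟, D.Coprime (QQ r p))
    (hu : ∀ B : ℕ, ∃ D ∈ 𝒟, B < D) :
    Dense {g : QP r p | ∃ (c : ℤ) (M D : ℕ), D ∈ 𝒟 ∧ g = iota r p (c / (D * (QQ r p : ℚ) ^ M))} := by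
  rw [Metric.dense_iff]
  intro x ε hε
  have hM : ∀ᶠ M : ℕ in atTop, ∀ i, ‖x.2 i * (QQ r p : ℚ_[p i]) ^ M‖ ≤ 1 := by
    rw [eventually_all]
    intro i
    have : Tendsto (fun M : ℕ => ‖x.2 i‖ * ‖(QQ r p : ℚ_[p i])‖ ^ M) atTop (𝓝 (‖x.2 i‖ * 0)) :=
      (tendsto_pow_atTop_nhds_zero_of_lt_one (norm_nonneg _) (norm_QQ_lt i)).const_mul _
    rw [mul_zero] at this
    filter_upwards [this.eventually (ge_mem_nhds one_pos)] with M hM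
    rwa [norm_mul, norm_pow]
  obtain ⟨M, hM⟩ := hM.exists
  have hN : ∀ᶠ N : ℕ in atTop, ∀ i, ‖(p i : ℚ_[p i])‖ ^ N < ε ∧
      ‖(p i : ℚ_[p i])‖ ^ N / ‖(QQ r p : ℚ_[p i])‖ ^ M < ε := by
    rw [eventually_all]
    intro i
    have h1 := tendsto_pow_atTop_nhds_zero_of_lt_one (norm_nonneg _)
      (Padic.norm_p_lt_one (p := p i))
    have h2 := h1.div_const (‖(QQ r p : ℚ_[p i])‖ ^ M)
    rw [zero_div] at h2
    exact (h1.eventually (gt_mem_nhds hε)).and (h2.eventually (gt_mem_nhds hε))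
  obtain ⟨N, hN⟩ := hN.exists
  obtain ⟨a, ha⟩ := crt_approx hinj (fun i => x.2 i * (QQ r p : ℚ_[p i]) ^ M) hM N
  obtain ⟨B, hB⟩ := exists_nat_gt ((QQ r p : ℝ) ^ N / ε)
  obtain ⟨D, hDm, hBD⟩ := hu B
  have hDpos : 0 < D := by omega
  have hDR : (0 : ℝ) < D := by exact_mod_cast hDpos
  have hQR : (0 : ℝ) < QQ r p := by exact_mod_cast QQ_pos r p
  set b : ℤ := round ((x.1 - a / (QQ r p : ℝ) ^ M) * D / (QQ r p : ℝ) ^ N) with hb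
  refine ⟨iota r p ((a : ℚ) / (QQ r p : ℚ) ^ M + b * (QQ r p : ℚ) ^ N / D), ?_,
    a * D + b * (QQ r p : ℤ) ^ (N + M), M, D, hDm, ?_⟩
  · rw [Metric.mem_ball, dist_comm, Prod.dist_eq]
    refine max_lt ?_ ((dist_pi_lt_iff hε).2 fun i => ?_)
    · rw [Real.dist_eq]
      have h1 := abs_sub_round ((x.1 - a / (QQ r p : ℝ) ^ M) * D / (QQ r p : ℝ) ^ N)
      rw [← hb] at h1
      have h2 : x.1 - (iota r p ((a : ℚ) / (QQ r p : ℚ) ^ M + b * (QQ r p : ℚ) ^ N / D)).1 =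
          ((x.1 - a / (QQ r p : ℝ) ^ M) * D / (QQ r p : ℝ) ^ N - b) * ((QQ r p : ℝ) ^ N / D) := by
        simp only [iota]
        push_cast
        field_simp
        ring
      rw [h2, abs_mul, abs_of_pos (by positivity : 0 < (QQ r p : ℝ) ^ N / D)]
      have h3 : (QQ r p : ℝ) ^ N / D < ε := by
        rw [div_lt_iff₀ hDR]
        rw [div_lt_iff₀ hε] at hB
        have : (B : ℝ) < D := by exact_mod_cast hBD
        nlinarith
      have h4 : 0 < (QQ r p : ℝ) ^ N / D := by positivity
      nlinarith
    · rw [dist_eq_norm]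
      have hQi := QQ_ne_padic (p := p) i
      have hDi : (D : ℚ_[p i]) ≠ 0 := by exact_mod_cast hDpos.ne'
      have h2 : x.2 i - (iota r p ((a : ℚ) / (QQ r p : ℚ) ^ M + b * (QQ r p : ℚ) ^ N / D)).2 i =
          (x.2 i * (QQ r p : ℚ_[p i]) ^ M - a) / (QQ r p : ℚ_[p i]) ^ M -
            b * (QQ r p : ℚ_[p i]) ^ N / D := by
        simp only [iota]
        push_cast
        field_simp
        ring
      rw [h2, sub_eq_add_neg]
      refine (Padic.nonarchimedean _ _).trans_lt (max_lt ?_ ?_)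
      · rw [norm_div, norm_pow]
        refine lt_of_le_of_lt ?_ (hN i).2
        gcongr
        exact ha i
      · rw [norm_neg, norm_div, norm_cop (hD D hDm), div_one, norm_mul, norm_pow]
        refine lt_of_le_of_lt ?_ (hN i).1
        calc _ ≤ 1 * ‖(p i : ℚ_[p i])‖ ^ N := by
              gcongr
              · exact Padic.norm_int_le_one b
              · exact norm_QQ_le i
          _ = _ := one_mul _
  · congr 1
    have := QQ_ne r p
    have hDi : (D : ℚ) ≠ 0 := by exact_mod_cast hDpos.ne'
    push_cast
    field_simp
    ring
end

section
variable {r : ℕ} {p : Fin r → ℕ} [∀ i, Fact (p i).Prime]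

lemma padicHaar_unit (q : ℕ) [Fact q.Prime] : padicHaar q (Metric.closedBall 0 1) = 1 := by
  unfold padicHaar
  exact Measure.addHaarMeasure_self

lemma mp_unit (q : ℕ) [Fact q.Prime] (u : ℚ_[q]) (hu : ‖u‖ = 1) :
    MeasurePreserving (fun x => u * x) (padicHaar q) (padicHaar q) := by
  have hu0 : u ≠ 0 := by rintro rfl; simp at hu
  refine ⟨by fun_prop, ?_⟩
  have hH : (Measure.map (fun x => u * x) (padicHaar q)).IsAddHaarMeasure :=
    AddEquiv.isAddHaarMeasure_map (padicHaar q)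
      ({ toFun := fun x => u * x, invFun := fun x => u⁻¹ * x,
         left_inv := fun x => inv_mul_cancel_left₀ hu0 x,
         right_inv := fun x => mul_inv_cancel_left₀ hu0 x,
         map_add' := fun x y => mul_add u x y } : ℚ_[q] ≃+ ℚ_[q])
      (continuous_const.mul continuous_id) (continuous_const.mul continuous_id)
  conv_rhs => unfold padicHaar
  refine ((Measure.addHaarMeasure_eq_iff _ _).2 ?_).symm
  change Measure.map (fun x => u * x) (padicHaar q) (Metric.closedBall 0 1) = 1
  rw [Measure.map_apply (by fun_prop) measurableSet_closedBall]
  rw [← padicHaar_unit q]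
  congr 1
  ext x
  simp [hu]

lemma measurable_smulQ (q : ℚ) : Measurable (smulQ r p q) := by
  unfold smulQ
  fun_prop

lemma map_smulQ (q : ℕ) (hq0 : 0 < q) (hq : q.Coprime (QQ r p)) :
    Measure.map (smulQ r p q) (lamP r p) = ENNReal.ofReal ((q : ℝ)⁻¹) • lamP r p := by
  have h1 : MeasurePreserving (fun (a : (i : Fin r) → ℚ_[p i]) i => (q : ℚ_[p i]) * a i)
      (Measure.pi fun i => padicHaar (p i)) (Measure.pi fun i => padicHaar (p i)) :=
    measurePreserving_pi _ _ fun i => mp_unit _ _ (norm_cop hq i)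
  have h2 : smulQ r p q = Prod.map (fun x : ℝ => (q : ℝ) * x)
      (fun (a : (i : Fin r) → ℚ_[p i]) i => (q : ℚ_[p i]) * a i) := by
    funext x
    simp [smulQ, Prod.map]
  have hqR : (0 : ℝ) < q := by exact_mod_cast hq0
  unfold lamP
  rw [h2, ← Measure.map_prod_map _ _ (by fun_prop) h1.measurable, h1.map_eq,
    Real.map_volume_mul_left hqR.ne', Measure.prod_smul_left, abs_of_pos (by positivity)]

def DD (r : ℕ) (p : Fin r → ℕ) [∀ i, Fact (p i).Prime] (M : ℕ) (w : ℝ) : Set (QP r p) :=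
  {x | x.1 ∈ Ico 0 w ∧ ∀ i, ‖x.2 i‖ ≤ ‖(QQ r p : ℚ_[p i])‖⁻¹ ^ M}

lemma DD_eq (M : ℕ) (w : ℝ) : DD r p M w = Ico 0 w ×ˢ (Set.pi univ fun i =>
    Metric.closedBall (0 : ℚ_[p i]) (‖(QQ r p : ℚ_[p i])‖⁻¹ ^ M)) := by
  ext x
  simp [DD]

lemma DD_meas (M : ℕ) (w : ℝ) : MeasurableSet (DD r p M w) := by
  rw [DD_eq]
  exact measurableSet_Ico.prod (MeasurableSet.univ_pi fun i => measurableSet_closedBall)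

lemma DD_lt_top (M : ℕ) (w : ℝ) : lamP r p (DD r p M w) < ⊤ := by
  rw [DD_eq]
  refine (measure_mono (prod_mono Ico_subset_Icc_self subset_rfl)).trans_lt
    (IsCompact.measure_lt_top ?_)
  exact isCompact_Icc.prod (isCompact_univ_pi fun i => isCompact_closedBall _ _)

lemma norm_frac_le (j : ℤ) (M : ℕ) (i : Fin r) :
    ‖(((j : ℚ) / (QQ r p : ℚ) ^ M : ℚ) : ℚ_[p i])‖ ≤ ‖(QQ r p : ℚ_[p i])‖⁻¹ ^ M := by
  push_cast
  rw [norm_div, norm_pow, inv_pow, div_eq_mul_inv]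
  exact mul_le_of_le_one_left (by positivity) (Padic.norm_int_le_one j)

lemma DD_shift {M : ℕ} {x : QP r p} (hx : ∀ i, ‖x.2 i‖ ≤ ‖(QQ r p : ℚ_[p i])‖⁻¹ ^ M) :
    x + iota r p (((-⌊x.1 * (QQ r p : ℝ) ^ M⌋ : ℤ) : ℚ) / (QQ r p : ℚ) ^ M) ∈
      DD r p M (1 / (QQ r p : ℝ) ^ M) := by
  have hQR : (0 : ℝ) < (QQ r p : ℝ) ^ M := pow_pos (by exact_mod_cast QQ_pos r p) _
  refine ⟨?_, fun i => ?_⟩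
  · have h1 := Int.floor_le (x.1 * (QQ r p : ℝ) ^ M)
    have h2 := Int.lt_floor_add_one (x.1 * (QQ r p : ℝ) ^ M)
    simp only [iota, Prod.fst_add]
    push_cast
    have : x.1 + -(⌊x.1 * (QQ r p : ℝ) ^ M⌋ : ℝ) / (QQ r p : ℝ) ^ M =
      (x.1 * (QQ r p : ℝ) ^ M - ⌊x.1 * (QQ r p : ℝ) ^ M⌋) / (QQ r p : ℝ) ^ M := by
      field_simp
      ring
    rw [this]
    refine ⟨div_nonneg (by linarith) hQR.le, ?_⟩
    gcongr
    linarith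
  · simp only [iota, Prod.snd_add, Pi.add_apply]
    exact (Padic.nonarchimedean _ _).trans (max_le (hx i) (norm_frac_le _ M i))

lemma exists_M (x : QP r p) : ∃ M : ℕ, ∀ i, ‖x.2 i‖ ≤ ‖(QQ r p : ℚ_[p i])‖⁻¹ ^ M := by
  have hM : ∀ᶠ M : ℕ in atTop, ∀ i, ‖x.2 i‖ ≤ ‖(QQ r p : ℚ_[p i])‖⁻¹ ^ M := by
    rw [eventually_all]
    intro i
    have := tendsto_pow_atTop_atTop_of_one_lt
      ((one_lt_inv₀ (norm_pos_iff.2 (QQ_ne_padic (p := p) i))).2 (norm_QQ_lt i))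
    exact this.eventually_ge_atTop _
  exact hM.exists

/-- periodic sets null on all the fundamental domains are null -/
lemma null_of_DD {V : Set (QP r p)}
    (hV : ∀ x ∈ V, ∀ (c : ℤ) (M : ℕ), x + iota r p ((c : ℚ) / (QQ r p : ℚ) ^ M) ∈ V)
    (h : ∀ M, lamP r p (DD r p M (1 / (QQ r p : ℝ) ^ M) ∩ V) = 0) : lamP r p V = 0 := by
  have hsub : V ⊆ ⋃ (M : ℕ), ⋃ (j : ℤ), (fun x => x + iota r p ((j : ℚ) / (QQ r p : ℚ) ^ M)) ⁻¹'
      (DD r p M (1 / (QQ r p : ℝ) ^ M) ∩ V) := by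
    intro x hx
    obtain ⟨M, hM⟩ := exists_M x
    exact mem_iUnion.2 ⟨M, mem_iUnion.2 ⟨_, DD_shift hM, hV x hx _ M⟩⟩
  refine measure_mono_null hsub (measure_iUnion_null fun M => measure_iUnion_null fun j => ?_)
  rw [measure_preimage_add_right]
  exact h M

lemma mult_step (q : ℕ) (hq0 : 0 < q) (hq : q.Coprime (QQ r p)) {U : Set (QP r p)}
    (hU : MeasurableSet U)
    (hper : ∀ x ∈ U, ∀ (c : ℤ) (M : ℕ), x + iota r p ((c : ℚ) / (QQ r p : ℚ) ^ M) ∈ U)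
    (M : ℕ) : lamP r p (DD r p M (1 / (QQ r p : ℝ) ^ M) ∩ smulQ r p q ⁻¹' U) ≤
      lamP r p (DD r p M (1 / (QQ r p : ℝ) ^ M) ∩ U) := by
  set w := 1 / (QQ r p : ℝ) ^ M with hw
  have hQR : (0 : ℝ) < (QQ r p : ℝ) ^ M := pow_pos (by exact_mod_cast QQ_pos r p) _
  have hqR : (0 : ℝ) < q := by exact_mod_cast hq0
  have h1 : DD r p M w ∩ smulQ r p q ⁻¹' U ⊆ smulQ r p q ⁻¹' (DD r p M (q * w) ∩ U) := by
    rintro x ⟨⟨hx1, hx2⟩, hx3⟩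
    refine ⟨⟨⟨?_, ?_⟩, fun i => ?_⟩, hx3⟩
    · have := hx1.1
      simp only [smulQ]; positivity
    · simp only [smulQ]
      have := hx1.2
      push_cast
      gcongr
    · simp only [smulQ]
      push_cast
      rw [norm_mul, norm_cop hq, one_mul]
      exact hx2 i
  have h2 : DD r p M (q * w) ∩ U ⊆ ⋃ j ∈ Finset.range q,
      (fun x => x + iota r p (((-(j : ℤ) : ℤ) : ℚ) / (QQ r p : ℚ) ^ M)) ⁻¹' (DD r p M w ∩ U) := by
    rintro x ⟨⟨hx1, hx2⟩, hx3⟩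
    have hfl : 0 ≤ ⌊x.1 * (QQ r p : ℝ) ^ M⌋ := Int.floor_nonneg.2 (mul_nonneg hx1.1 hQR.le)
    obtain ⟨j, hj⟩ := Int.eq_ofNat_of_zero_le hfl
    refine mem_iUnion₂.2 ⟨j, ?_, ?_, hper x hx3 _ _⟩
    · rw [Finset.mem_range]
      have h3 := Int.floor_le (x.1 * (QQ r p : ℝ) ^ M)
      rw [hj] at h3
      have h4 := hx1.2
      rw [hw, mul_one_div, lt_div_iff₀ hQR] at h4
      have h5 : (j : ℝ) < q := by
        refine lt_of_le_of_lt ?_ h4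
        exact_mod_cast h3
      exact_mod_cast h5
    · have := DD_shift hx2
      rw [hj] at this
      exact this
  have hm : MeasurableSet (DD r p M (q * w) ∩ U) := (DD_meas _ _).inter hU
  calc lamP r p (DD r p M w ∩ smulQ r p q ⁻¹' U)
      ≤ lamP r p (smulQ r p q ⁻¹' (DD r p M (q * w) ∩ U)) := measure_mono h1
    _ = ENNReal.ofReal ((q : ℝ)⁻¹) * lamP r p (DD r p M (q * w) ∩ U) := by
        rw [← Measure.map_apply (measurable_smulQ _) hm, map_smulQ q hq0 hq]
        rfl
    _ ≤ ENNReal.ofReal ((q : ℝ)⁻¹) * (q * lamP r p (DD r p M w ∩ U)) := by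
        gcongr
        refine (measure_mono h2).trans ((measure_biUnion_finset_le _ _).trans ?_)
        simp only [measure_preimage_add_right]
        simp
    _ = lamP r p (DD r p M w ∩ U) := by
        rw [← mul_assoc, ENNReal.ofReal_inv_of_pos hqR, ENNReal.ofReal_natCast,
          ENNReal.inv_mul_cancel (by exact_mod_cast hq0.ne') (by simp), one_mul]

lemma mult_zero_one (hinj : Function.Injective p) (q : ℕ) (hq1 : 1 < q) (hq : q.Coprime (QQ r p))
    {U : Set (QP r p)} (hU : MeasurableSet U)
    (hper : ∀ x ∈ U, ∀ (c : ℤ) (M : ℕ), x + iota r p ((c : ℚ) / (QQ r p : ℚ) ^ M) ∈ U)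
    (hmul : ∀ x ∈ U, smulQ r p q x ∈ U) :
    lamP r p U = 0 ∨ lamP r p Uᶜ = 0 := by
  have hq0 : 0 < q := by omega
  have hqQ : (q : ℚ) ≠ 0 := by exact_mod_cast hq0.ne'
  have hQ := QQ_ne r p
  -- one step for any power
  have hmulk : ∀ k : ℕ, ∀ x ∈ U, smulQ r p ((q ^ k : ℕ) : ℚ) x ∈ U := by
    intro k
    induction k with
    | zero =>
      intro x hx
      have : smulQ r p ((q ^ 0 : ℕ) : ℚ) x = x := by ext <;> simp [smulQ]
      rwa [this]
    | succ k ih =>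
      intro x hx
      have := hmul _ (ih x hx)
      rw [smulQ_smulQ] at this
      convert this using 2
      push_cast; ring
  have hnull : ∀ k : ℕ, lamP r p (smulQ r p ((q ^ k : ℕ) : ℚ) ⁻¹' U \ U) = 0 := by
    intro k
    have hck : (q ^ k).Coprime (QQ r p) := Nat.Coprime.pow_left _ hq
    apply null_of_DD
    · rintro x ⟨hx1, hx2⟩ c M
      refine ⟨?_, fun hx => hx2 ?_⟩
      · have := hper _ hx1 ((q ^ k : ℕ) * c) M
        rw [mem_preimage, smulQ_add, smulQ_iota]
        convert this using 3
        push_cast; ring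
      · have := hper _ hx (-c) M
        rw [add_assoc, ← iota_add] at this
        convert this using 1
        have h0 : (c : ℚ) / (QQ r p : ℚ) ^ M + ((-c : ℤ) : ℚ) / (QQ r p : ℚ) ^ M = 0 := by
          push_cast; ring
        rw [h0]
        ext <;> simp [iota]
    · intro M
      have h1 := mult_step (q ^ k) (by positivity) hck hU hper M
      set D := DD r p M (1 / (QQ r p : ℝ) ^ M)
      have h2 : D ∩ (smulQ r p ((q ^ k : ℕ) : ℚ) ⁻¹' U \ U) =
          (D ∩ smulQ r p ((q ^ k : ℕ) : ℚ) ⁻¹' U) \ (D ∩ U) := by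
        ext x; simp only [mem_inter_iff, Set.mem_sdiff]; tauto
      have h3 : D ∩ U ⊆ D ∩ smulQ r p ((q ^ k : ℕ) : ℚ) ⁻¹' U :=
        inter_subset_inter_right _ fun x hx => hmulk k x hx
      rw [h2, measure_sdiff h3 ((DD_meas _ _).inter hU).nullMeasurableSet
        ((measure_mono inter_subset_left).trans_lt (DD_lt_top _ _)).ne]
      exact tsub_eq_zero_of_le h1
  refine aeconst_dense (lamP r p) hU _ (dense_T hinj (range fun k : ℕ => q ^ k) ?_ ?_) ?_
  · rintro _ ⟨k, rfl⟩
    exact Nat.Coprime.pow_left _ hq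
  · intro B
    exact ⟨q ^ B, ⟨B, rfl⟩, Nat.lt_pow_self hq1⟩
  · rintro g ⟨c, M, D, ⟨k, rfl⟩, rfl⟩
    have := hnull k
    refine measure_mono_null ?_ this
    intro x hx
    simp only [mem_compl_iff, mem_ofPred_eq, Classical.not_imp] at hx
    refine ⟨?_, hx.2⟩
    have h1 := hper _ (hmulk k _ hx.1) (-c) M
    rw [smulQ_add, smulQ_iota, add_comm (iota r p _), add_assoc, ← iota_add] at h1
    rw [mem_preimage]
    convert h1 using 1
    have h0 : ((q ^ k : ℕ) : ℚ) * ((c : ℚ) / (((q ^ k : ℕ) : ℚ) * (QQ r p : ℚ) ^ M)) +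
        ((-c : ℤ) : ℚ) / (QQ r p : ℚ) ^ M = 0 := by
      push_cast; field_simp; ring
    rw [h0]
    ext <;> simp [iota]
end

section
variable {r : ℕ} {p : Fin r → ℕ} [∀ i, Fact (p i).Prime]

lemma aff_zero_one (hinj : Function.Injective p) (q : ℕ) (hq1 : 1 < q) (hq : q.Coprime (QQ r p))
    (s : ℚ) {U : Set (QP r p)} (hU : MeasurableSet U)
    (hper : ∀ x ∈ U, ∀ (c : ℤ) (M : ℕ), x + iota r p ((c : ℚ) / (QQ r p : ℚ) ^ M) ∈ U)
    (hmul : ∀ x ∈ U, smulQ r p q x + iota r p s ∈ U) :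
    lamP r p U = 0 ∨ lamP r p Uᶜ = 0 := by
  set x0 : ℚ := -s / (q - 1) with hx0
  have hq1' : (q : ℚ) - 1 ≠ 0 := by
    have : (1 : ℚ) < q := by exact_mod_cast hq1
    linarith
  have e : (q : ℚ) * x0 + s = x0 := by
    rw [hx0]; field_simp; ring
  have h := mult_zero_one hinj q hq1 hq (U := (fun y => y + iota r p x0) ⁻¹' U)
    ((measurable_add_const _) hU) ?_ ?_
  · rw [← preimage_compl, measure_preimage_add_right, measure_preimage_add_right] at h
    exact h
  · intro x hx c M
    have := hper _ hx c M
    rw [mem_preimage]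
    rwa [add_right_comm] at this
  · intro x hx
    have := hmul _ hx
    rw [smulQ_add, smulQ_iota, add_assoc, ← iota_add, e] at this
    exact this

def OO (r : ℕ) (p : Fin r → ℕ) [∀ i, Fact (p i).Prime] (A : ℕ → ℚ → Prop) (ρ0 : ℚ → ℝ)
    (ρ : Fin r → ℚ → ℝ) (n : ℕ) (c : ℝ) : Set (QP r p) :=
  {x | ∃ γ z : ℚ, A n γ ∧ Ctr r p n z ∧ |x.1 - (z : ℝ)| ≤ c * ρ0 γ ∧
    ∀ i, ‖x.2 i - (z : ℚ_[p i])‖ ≤ ρ i γ}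

def WW (r : ℕ) (p : Fin r → ℕ) [∀ i, Fact (p i).Prime] (A : ℕ → ℚ → Prop) (ρ0 : ℚ → ℝ)
    (ρ : Fin r → ℚ → ℝ) (S : Set ℕ) (c : ℝ) : Set (QP r p) :=
  {x | ∃ᶠ n in atTop, n ∈ S ∧ x ∈ OO r p A ρ0 ρ n c}

variable {A : ℕ → ℚ → Prop} {ρ0 : ℚ → ℝ} {ρ : Fin r → ℚ → ℝ}

lemma OO_meas (n : ℕ) (c : ℝ) : MeasurableSet (OO r p A ρ0 ρ n c) := by
  have : OO r p A ρ0 ρ n c = ⋃ (γ : ℚ), ⋃ (z : ℚ), {x | (A n γ ∧ Ctr r p n z)} ∩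
      ({x | |x.1 - (z : ℝ)| ≤ c * ρ0 γ} ∩ ⋂ i, {x | ‖x.2 i - (z : ℚ_[p i])‖ ≤ ρ i γ}) := by
    ext x
    simp [OO, and_assoc]
  rw [this]
  refine MeasurableSet.iUnion fun γ => MeasurableSet.iUnion fun z => ?_
  refine (MeasurableSet.const _).inter (IsClosed.measurableSet (IsClosed.inter ?_
    (isClosed_iInter fun i => ?_)))
  · exact isClosed_le (by fun_prop) continuous_const
  · exact isClosed_le (by fun_prop) continuous_const

lemma WW_meas (S : Set ℕ) (c : ℝ) : MeasurableSet (WW r p A ρ0 ρ S c) := by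
  have : WW r p A ρ0 ρ S c = ⋂ (a : ℕ), ⋃ (b : ℕ), {x | (a ≤ b ∧ b ∈ S)} ∩ OO r p A ρ0 ρ b c := by
    ext x
    simp [WW, frequently_atTop, and_assoc]
  rw [this]
  exact MeasurableSet.iInter fun a => MeasurableSet.iUnion fun b =>
    (MeasurableSet.const _).inter (OO_meas _ _)

lemma OO_add {n : ℕ} {c : ℝ} {x : QP r p} (hx : x ∈ OO r p A ρ0 ρ n c) (s : ℚ)
    (h : ∀ z, Ctr r p n z → Ctr r p n (z + s)) : x + iota r p s ∈ OO r p A ρ0 ρ n c := by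
  obtain ⟨γ, z, hA, hz, h1, h2⟩ := hx
  refine ⟨γ, z + s, hA, h z hz, ?_, fun i => ?_⟩
  · simpa [iota] using h1
  · simpa [iota] using h2 i

lemma OO_aff {n q : ℕ} (hq : q.Coprime (QQ r p)) {c : ℝ} {x : QP r p}
    (hx : x ∈ OO r p A ρ0 ρ n c) (s : ℚ)
    (h : ∀ z, Ctr r p n z → Ctr r p n (q * z + s)) :
    smulQ r p q x + iota r p s ∈ OO r p A ρ0 ρ n (q * c) := by
  obtain ⟨γ, z, hA, hz, h1, h2⟩ := hx
  refine ⟨γ, q * z + s, hA, h z hz, ?_, fun i => ?_⟩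
  · simp only [iota, smulQ, Prod.fst_add]
    push_cast
    have : (q : ℝ) * x.1 + s - (q * z + s) = q * (x.1 - z) := by ring
    rw [this, abs_mul, Nat.abs_cast, mul_assoc]
    gcongr
  · simp only [iota, smulQ, Prod.snd_add, Pi.add_apply]
    push_cast
    have : (q : ℚ_[p i]) * x.2 i + s - (q * z + s) = q * (x.2 i - z) := by ring
    rw [this, norm_mul, norm_cop hq, one_mul]
    exact h2 i

lemma OO_mono (hA0 : ∀ n γ, A n γ → 0 ≤ ρ0 γ) {n : ℕ} {c c' : ℝ} (hc : c ≤ c') :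
    OO r p A ρ0 ρ n c ⊆ OO r p A ρ0 ρ n c' := by
  rintro x ⟨γ, z, hA, hz, h1, h2⟩
  exact ⟨γ, z, hA, hz, h1.trans (mul_le_mul_of_nonneg_right hc (hA0 _ _ hA)), h2⟩

lemma WW_cassels (hA1 : ∀ n γ, A n γ → ρ0 γ ≤ 1 / (n : ℝ)) (S : Set ℕ) {c : ℝ} (hc : 1 ≤ c) :
    lamP r p (WW r p A ρ0 ρ S c \ WW r p A ρ0 ρ S 1) = 0 := by
  have hm : MeasurableSet (WW r p A ρ0 ρ S c \ WW r p A ρ0 ρ S 1) :=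
    (WW_meas _ _).diff (WW_meas _ _)
  unfold lamP
  rw [Measure.prod_apply_symm hm]
  refine (lintegral_congr fun y => ?_).trans lintegral_zero
  have h := cassels_real (fun n b ρ' => n ∈ S ∧ ∃ γ z : ℚ, A n γ ∧ Ctr r p n z ∧ b = z ∧ ρ' = ρ0 γ ∧
    ∀ i, ‖y i - (z : ℚ_[p i])‖ ≤ ρ i γ) ?_ c hc
  · refine measure_mono_null ?_ h
    have key : ∀ (x c' : ℝ) (n : ℕ), (n ∈ S ∧ (x, y) ∈ OO r p A ρ0 ρ n c') ↔ ∃ b ρ' : ℝ, (n ∈ S ∧ ∃ γ z : ℚ, A n γ ∧ Ctr r p n z ∧ b = z ∧ ρ' = ρ0 γ ∧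
      ∀ i, ‖y i - (z : ℚ_[p i])‖ ≤ ρ i γ) ∧ |x - b| ≤ c' * ρ' := by
      intro x c' n
      constructor
      · rintro ⟨hn, γ, z, hA, hz, h1, h2⟩
        exact ⟨z, ρ0 γ, ⟨hn, γ, z, hA, hz, rfl, rfl, h2⟩, h1⟩
      · rintro ⟨_, _, ⟨hn, γ, z, hA, hz, rfl, rfl, h2⟩, h1⟩
        exact ⟨hn, γ, z, hA, hz, h1, h2⟩
    rintro x ⟨hx1, hx2⟩
    refine ⟨?_, fun hx => hx2 ?_⟩
    · exact hx1.mono fun n hn => (key x c n).1 hn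
    · refine hx.mono fun n hn => (key x 1 n).2 ?_
      simpa only [one_mul] using hn
  · rintro n b ρ' ⟨hn, γ, z, hA, hz, rfl, rfl, h2⟩
    exact hA1 _ _ hA

lemma WW_aff (hinj : Function.Injective p) (hA0 : ∀ n γ, A n γ → 0 ≤ ρ0 γ)
    (hA1 : ∀ n γ, A n γ → ρ0 γ ≤ 1 / (n : ℝ)) (q : ℕ) (hq1 : 1 < q)
    (hq : q.Coprime (QQ r p)) (s : ℚ) (S : Set ℕ)
    (h : ∀ n ∈ S, ∀ z, Ctr r p n z → Ctr r p n (q * z + s)) :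
    lamP r p (WW r p A ρ0 ρ S 1) = 0 ∨ lamP r p (WW r p A ρ0 ρ S 1)ᶜ = 0 := by
  set U := ⋃ k : ℕ, WW r p A ρ0 ρ S ((q : ℝ) ^ k) with hU
  have hq1R : (1 : ℝ) ≤ q := by exact_mod_cast hq1.le
  have hsub : WW r p A ρ0 ρ S 1 ⊆ U := by
    intro x hx
    exact mem_iUnion.2 ⟨0, by simpa using hx⟩
  have hd : lamP r p (U \ WW r p A ρ0 ρ S 1) = 0 := by
    rw [hU, iUnion_sdiff]
    exact measure_iUnion_null fun k => WW_cassels hA1 S (one_le_pow₀ hq1R)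
  have := aff_zero_one hinj q hq1 hq s (U := U) (MeasurableSet.iUnion fun k => WW_meas _ _) ?_ ?_
  · rcases this with h | h
    · exact Or.inl (measure_mono_null hsub h)
    · right
      refine measure_mono_null ?_ (measure_union_null h hd)
      intro x hx
      by_cases hxU : x ∈ U
      · exact Or.inr ⟨hxU, hx⟩
      · exact Or.inl hxU
  · intro x hx c M
    obtain ⟨k, hk⟩ := mem_iUnion.1 hx
    refine mem_iUnion.2 ⟨k, hk.mono fun n hn => ⟨hn.1, OO_add hn.2 _ fun z hz => ctr_add hz c M⟩⟩
  · intro x hx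
    obtain ⟨k, hk⟩ := mem_iUnion.1 hx
    refine mem_iUnion.2 ⟨k + 1, hk.mono fun n hn => ⟨hn.1, ?_⟩⟩
    rw [pow_succ']
    exact OO_aff hq hn.2 _ (h n hn.1)

lemma WW_sub {S T : Set ℕ} (h : S ⊆ T) (c : ℝ) : WW r p A ρ0 ρ S c ⊆ WW r p A ρ0 ρ T c :=
  fun _ hx => hx.mono fun _ hn => ⟨h hn.1, hn.2⟩

theorem abstract_zero_one (hinj : Function.Injective p) (hA0 : ∀ n γ, A n γ → 0 ≤ ρ0 γ)
    (hA1 : ∀ n γ, A n γ → ρ0 γ ≤ 1 / (n : ℝ)) :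
    lamP r p (WW r p A ρ0 ρ univ 1) = 0 ∨ lamP r p (WW r p A ρ0 ρ univ 1)ᶜ = 0 := by
  by_cases hcon : lamP r p (WW r p A ρ0 ρ univ 1)ᶜ = 0
  · exact Or.inr hcon
  have hS : ∀ S, lamP r p (WW r p A ρ0 ρ S 1)ᶜ ≠ 0 := fun S h =>
    hcon (measure_mono_null (compl_subset_compl.2 (WW_sub (subset_univ S) 1)) h)
  have hnull : ∀ q : ℕ, q.Prime → q.Coprime (QQ r p) →
      lamP r p (WW r p A ρ0 ρ univ 1 \ WW r p A ρ0 ρ {n | q * q ∣ n} 1) = 0 := by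
    intro q hqp hq
    have h1 := (WW_aff (A := A) (ρ0 := ρ0) (ρ := ρ) hinj hA0 hA1 q hqp.one_lt hq 0 {n | ¬ q ∣ n} (by
      intro n hn z hz
      rw [add_zero]
      exact ctr_mul hz ((Nat.Prime.coprime_iff_not_dvd hqp).2 hn))).resolve_right (hS _)
    have h2 := (WW_aff (A := A) (ρ0 := ρ0) (ρ := ρ) hinj hA0 hA1 q hqp.one_lt hq (1 / q)
      {n | ∃ n', n = q * n' ∧ ¬ q ∣ n'} (by
      rintro n ⟨n', rfl, hn⟩ z hz
      exact ctr_ii hz ((Nat.Prime.coprime_iff_not_dvd hqp).2 hn) hq)).resolve_right (hS _)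
    refine measure_mono_null ?_ (measure_union_null h1 h2)
    rintro x ⟨hx1, hx2⟩
    by_contra hno
    simp only [mem_union, not_or] at hno
    obtain ⟨hn1, hn2⟩ := hno
    simp only [WW, mem_ofPred_eq, not_frequently] at hn1 hn2 hx2
    refine hx1 ?_
    filter_upwards [hn1, hn2, hx2] with n a1 a2 a3 h
    by_cases c1 : q ∣ n
    · obtain ⟨n', rfl⟩ := c1
      by_cases c2 : q ∣ n'
      · exact a3 ⟨Nat.mul_dvd_mul_left q c2, h.2⟩
      · exact a2 ⟨⟨n', rfl, c2⟩, h.2⟩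
    · exact a1 ⟨c1, h.2⟩
  refine aeconst_dense (lamP r p) (WW_meas _ _) _ (dense_T hinj {q | q.Prime ∧ q.Coprime (QQ r p)}
    (fun D h => h.2) ?_) ?_
  · intro B
    obtain ⟨q, hq1, hq2⟩ := Nat.exists_infinite_primes (B + QQ r p + 1)
    refine ⟨q, ⟨hq2, ?_⟩, by omega⟩
    rw [Nat.Prime.coprime_iff_not_dvd hq2]
    intro h
    have := Nat.le_of_dvd (QQ_pos r p) h
    omega
  · rintro g ⟨c, M, q, ⟨hqp, hq⟩, rfl⟩
    have h := hnull q hqp hq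
    set g := iota r p ((c : ℚ) / (q * (QQ r p : ℚ) ^ M)) with hg
    have h' : lamP r p ((fun x => g + x) ⁻¹'
      (WW r p A ρ0 ρ univ 1 \ WW r p A ρ0 ρ {n | q * q ∣ n} 1)) = 0 := by
      rw [measure_preimage_add]; exact h
    refine measure_mono_null ?_ h'
    intro x hx
    simp only [mem_compl_iff, mem_ofPred_eq, Classical.not_imp] at hx
    refine ⟨hx.1, fun h3 => hx.2 ?_⟩
    have : x = (g + x) + iota r p (((-c : ℤ) : ℚ) / (q * (QQ r p : ℚ) ^ M)) := by
      rw [show ((-c : ℤ) : ℚ) / (q * (QQ r p : ℚ) ^ M) = -((c : ℚ) / (q * (QQ r p : ℚ) ^ M)) by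
        push_cast; ring, iota_neg, ← hg]
      abel
    rw [this]
    exact Frequently.mono h3 fun n hn => ⟨mem_univ _, OO_add hn.2 _ fun z hz => ctr_iii hz hn.1 _ M⟩
end

section
variable {r : ℕ} {p : Fin r → ℕ} [∀ i, Fact (p i).Prime]

lemma pp_pos (i : Fin r) : 0 < p i := (Fact.out : (p i).Prime).pos

lemma pp_ne (i : Fin r) : (p i : ℚ) ≠ 0 := by exact_mod_cast (pp_pos i).ne'

lemma prodz_ne (ν : Fin r → ℤ) : ∏ i, (p i : ℚ) ^ (ν i) ≠ 0 :=
  Finset.prod_ne_zero_iff.2 fun i _ => zpow_ne_zero _ (pp_ne i)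

lemma npos (i : Fin r) {γ : ℚ} (hγ : γ ≠ 0) : 0 < ‖(γ : ℚ_[p i])‖ :=
  norm_pos_iff.2 (by exact_mod_cast hγ)

lemma norm_dec (hinj : Function.Injective p) {m : ℤ} {ν : Fin r → ℤ}
    (hm : ∀ i, ¬ ((p i : ℤ) ∣ m)) (i : Fin r) :
    ‖(((m : ℚ) * ∏ j, (p j : ℚ) ^ (ν j) : ℚ) : ℚ_[p i])‖ = (p i : ℝ) ^ (-ν i) := by
  push_cast
  rw [norm_mul, norm_prod]
  have h1 : ‖(m : ℚ_[p i])‖ = 1 := by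
    refine le_antisymm (Padic.norm_int_le_one m) (not_lt.1 fun h => hm i ?_)
    exact (Padic.norm_intCast_lt_one_iff).1 h
  rw [h1, one_mul, Finset.prod_eq_single i]
  · rw [norm_zpow, Padic.norm_p, inv_zpow, zpow_neg]
  · intro j _ hj
    rw [norm_zpow]
    have : ‖(p j : ℚ_[p i])‖ = 1 := by
      rw [Padic.norm_natCast_eq_one_iff]
      exact (Nat.coprime_primes Fact.out Fact.out).2 fun h => hj (hinj h.symm)
    rw [this, one_zpow]
  · simp

def AA (r : ℕ) (p : Fin r → ℕ) (n : ℕ) (γ : ℚ) : Prop :=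
  0 < n ∧ ∃ (m : ℤ) (ν : Fin r → ℤ), m.natAbs = n ∧ γ = (m : ℚ) * ∏ i, (p i : ℚ) ^ (ν i) ∧
    ∀ i, ¬ ((p i : ℤ) ∣ m)

lemma AA_ne {n : ℕ} {γ : ℚ} (h : AA r p n γ) : γ ≠ 0 := by
  obtain ⟨h0, m, ν, rfl, rfl, hm⟩ := h
  refine mul_ne_zero ?_ (prodz_ne ν)
  have : m ≠ 0 := by omega
  exact_mod_cast this

lemma AA_prod (hinj : Function.Injective p) {n : ℕ} {γ : ℚ} (h : AA r p n γ) :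
    |(γ : ℝ)| * ∏ i, ‖(γ : ℚ_[p i])‖ = n := by
  obtain ⟨h0, m, ν, rfl, rfl, hm⟩ := h
  simp only [norm_dec hinj hm]
  push_cast
  rw [abs_mul, mul_assoc, Finset.abs_prod, ← Finset.prod_mul_distrib, Finset.prod_eq_one, mul_one,
    Nat.cast_natAbs, Int.cast_abs]
  intro i _
  have : (0 : ℝ) < p i := by exact_mod_cast pp_pos i
  rw [abs_of_pos (by positivity), ← zpow_add₀ this.ne']
  simp

lemma le_sup {f : Fin r → ℝ} (i : Fin r) : f i ≤ ⨆ i, f i :=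
  le_ciSup (finite_range f).bddAbove i

lemma psi_bd (hinj : Function.Injective p) {ψ : ℚ → ℝ} (hψL : ∀ γ, ψ γ ≤ 1 / (2 * LP r p γ))
    {n : ℕ} {γ : ℚ} (h : AA r p n γ) : ψ γ ≤ |(γ : ℝ)| / (2 * n) ∧
      ∀ i, ψ γ ≤ ‖(γ : ℚ_[p i])‖ / (2 * n) := by
  have hn : (0 : ℝ) < n := by exact_mod_cast h.1
  have hγ := AA_ne h
  have h1 : (n : ℝ) / |(γ : ℝ)| ≤ LP r p γ := by
    unfold LP
    rw [AA_prod hinj h]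
    exact le_max_left _ _
  have h2 : ∀ i, (n : ℝ) / ‖(γ : ℚ_[p i])‖ ≤ LP r p γ := by
    intro i
    unfold LP
    rw [AA_prod hinj h]
    exact (le_sup (f := fun i => (n : ℝ) / ‖(γ : ℚ_[p i])‖) i).trans (le_max_right _ _)
  have key : ∀ a : ℝ, 0 < a → n / a ≤ LP r p γ → ψ γ ≤ a / (2 * n) := by
    intro a ha h
    refine (hψL γ).trans ?_
    have : a / (2 * n) = 1 / (2 * (n / a)) := by field_simp
    rw [this]
    gcongr
  refine ⟨key _ (by simpa using hγ) h1, fun i => key _ (npos i hγ) (h2 i)⟩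

lemma psi_zero {ψ : ℚ → ℝ} (hψL : ∀ γ, ψ γ ≤ 1 / (2 * LP r p γ)) : ψ 0 ≤ 0 := by
  simpa [LP] using hψL 0

lemma dP_iff {x : QP r p} {β γ : ℚ} {t : ℝ} (ht : 0 ≤ t) :
    dP r p (smulQ r p γ x) (iota r p β) ≤ t ↔
      |(γ : ℝ) * x.1 - β| ≤ t ∧ ∀ i, ‖(γ : ℚ_[p i]) * x.2 i - β‖ ≤ t := by
  unfold dP smulQ iota
  rw [max_le_iff]
  refine and_congr_right fun _ => ⟨fun h i => ?_, fun h => ?_⟩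
  · exact (le_sup (f := fun i => ‖(γ : ℚ_[p i]) * x.2 i - β‖) i).trans h
  · exact Real.iSup_le h ht

/-- approximations in terms of the quotient -/
lemma dP_iff' {x : QP r p} {z γ : ℚ} (hγ : γ ≠ 0) {t : ℝ} (ht : 0 ≤ t) :
    dP r p (smulQ r p γ x) (iota r p (z * γ)) ≤ t ↔
      |x.1 - z| ≤ t / |(γ : ℝ)| ∧ ∀ i, ‖x.2 i - z‖ ≤ t / ‖(γ : ℚ_[p i])‖ := by
  rw [dP_iff ht]
  refine and_congr ?_ (forall_congr' fun i => ?_)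
  · rw [le_div_iff₀ (by simpa using hγ), ← abs_mul]
    push_cast
    ring_nf
  · rw [le_div_iff₀ (npos i hγ), ← norm_mul]
    push_cast
    ring_nf

lemma exists_dec (k : ℤ) (hk : k ≠ 0) (s : Finset (Fin r)) (hinj : Function.Injective p) :
    ∃ (m : ℤ) (e : Fin r → ℕ), k = m * ∏ i ∈ s, (p i : ℤ) ^ e i ∧ ∀ i ∈ s, ¬ (p i : ℤ) ∣ m := by
  classical
  induction s using Finset.induction_on with
  | empty => exact ⟨k, 0, by simp, by simp⟩
  | insert a s ha ih =>
    obtain ⟨m, e, h1, h2⟩ := ih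
    have hm : m ≠ 0 := by rintro rfl; simp at h1; exact hk h1
    have hf : FiniteMultiplicity (p a : ℤ) m := by
      rw [Int.finiteMultiplicity_iff]
      exact ⟨by simpa using (Fact.out : (p a).Prime).ne_one, hm⟩
    obtain ⟨c, hc1, hc2⟩ := hf.exists_eq_pow_mul_and_not_dvd
    refine ⟨c, Function.update e a (multiplicity (p a : ℤ) m), ?_, ?_⟩
    · rw [Finset.prod_insert ha, Function.update_self]
      have : ∏ i ∈ s, (p i : ℤ) ^ Function.update e a (multiplicity (p a : ℤ) m) i =
          ∏ i ∈ s, (p i : ℤ) ^ e i := by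
        refine Finset.prod_congr rfl fun i hi => ?_
        rw [Function.update_of_ne]
        rintro rfl; exact ha hi
      rw [this]
      conv_lhs => rw [h1, hc1]
      ring
    · intro i hi
      rcases Finset.mem_insert.1 hi with rfl | hi
      · exact hc2
      · intro hd
        refine h2 i hi ?_
        rw [hc1]
        exact hd.mul_left _

lemma pair_of_ctr (hinj : Function.Injective p) {n : ℕ} (hn : 2 ≤ n) {γ z : ℚ} (hA : AA r p n γ)
    (hz : Ctr r p n z) : CoprimePair r p (z * γ) γ := by
  obtain ⟨h0, m, ν, hmn, rfl, hm⟩ := hA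
  obtain ⟨_, hQ, k, N, hk, rfl⟩ := hz
  have hk0 : k ≠ 0 := by
    rintro rfl
    rw [isCoprime_zero_left, Int.isUnit_iff] at hk
    omega
  obtain ⟨m', e, he, hm'⟩ := exists_dec k hk0 Finset.univ hinj
  have hsgn : (m : ℤ) = m.sign * n := by rw [← hmn]; exact (Int.sign_mul_natAbs m).symm
  have hs : m.sign = 1 ∨ m.sign = -1 := by
    rcases lt_trichotomy m 0 with h | h | h
    · right; exact Int.sign_eq_neg_one_of_neg h
    · omega
    · left; exact Int.sign_eq_one_of_pos h
  refine ⟨m.sign * m', m, fun i => e i + ν i - N, ν, ?_, rfl, ?_, hm, ?_⟩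
  · have hn0 : (n : ℚ) ≠ 0 := by exact_mod_cast (by omega : n ≠ 0)
    have e1 : (m : ℚ) = m.sign * n := by exact_mod_cast hsgn
    have e2 : ∏ i, (p i : ℚ) ^ ((e i : ℤ) + ν i - N) =
        (∏ i, (p i : ℚ) ^ e i) * (∏ i, (p i : ℚ) ^ ν i) / (QQ r p : ℚ) ^ N := by
      rw [QQ]
      push_cast
      rw [← Finset.prod_pow, ← Finset.prod_mul_distrib, ← Finset.prod_div_distrib]
      refine Finset.prod_congr rfl fun i _ => ?_
      rw [zpow_sub₀ (pp_ne i), zpow_add₀ (pp_ne i)]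
      simp
    have e3 : (k : ℚ) = m' * ∏ i, (p i : ℚ) ^ e i := by exact_mod_cast he
    have hQ0 := QQ_ne r p
    rw [e2]
    conv_lhs => rw [e1, e3]
    push_cast
    field_simp
  · intro i
    rcases hs with h | h <;> rw [h] <;> simpa using hm' i (Finset.mem_univ i)
  · have h1 : IsCoprime m' (n : ℤ) := hk.of_isCoprime_of_dvd_left (by rw [he]; exact dvd_mul_right _ _)
    have h2 : IsCoprime m' m := by
      have : m ∣ (n : ℤ) := by rw [← hmn]; exact Int.dvd_natAbs.2 dvd_rfl
      exact h1.of_isCoprime_of_dvd_right this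
    rcases hs with h | h
    · rw [h, one_mul]; exact h2
    · rw [h, neg_one_mul]; exact h2.neg_left

lemma pinv_of_pair {β γ : ℚ} (h : CoprimePair r p β γ) : β ∈ PinvZ r p ∧ γ ∈ PinvZ r p := by
  obtain ⟨m, n, μ, ν, h1, h2, -⟩ := h
  exact ⟨⟨m, μ, h1⟩, ⟨n, ν, h2⟩⟩

def Wpsi (r : ℕ) (p : Fin r → ℕ) [∀ i, Fact (p i).Prime] (ψ : ℚ → ℝ) : Set (QP r p) :=
  WW r p (AA r p) (fun γ => ψ γ / |(γ : ℝ)|) (fun i γ => ψ γ / ‖(γ : ℚ_[p i])‖) univ 1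

lemma Wpsi_sub (hinj : Function.Injective p) {ψ : ℚ → ℝ} (hψ0 : ∀ γ, 0 ≤ ψ γ) :
    Wpsi r p ψ ∩ ZP r p ⊆ Epsi r p ψ := by
  rintro x ⟨hx, hxZ⟩
  refine ⟨hxZ, fun hfin => ?_⟩
  have hx' : ∃ᶠ n : ℕ in atTop, 2 ≤ n ∧ x ∈ OO r p (AA r p) (fun γ => ψ γ / |(γ : ℝ)|)
      (fun i γ => ψ γ / ‖(γ : ℚ_[p i])‖) n 1 :=
    (Frequently.and_eventually hx (eventually_ge_atTop 2)).mono fun n hn => ⟨hn.2, hn.1.2⟩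
  rw [Nat.frequently_atTop_iff_infinite] at hx'
  refine hx' ((hfin.image fun bg => ⌊|(bg.2 : ℝ)| * ∏ i, ‖(bg.2 : ℚ_[p i])‖⌋₊).subset ?_)
  rintro n ⟨hn, γ, z, hA, hz, h1, h2⟩
  have hp := pair_of_ctr hinj hn hA hz
  refine ⟨(z * γ, γ), ⟨(pinv_of_pair hp).1, (pinv_of_pair hp).2, hp, ?_⟩, ?_⟩
  · exact (dP_iff' (AA_ne hA) (hψ0 γ)).2 ⟨by simpa using h1, h2⟩
  · simp only [AA_prod hinj hA, Nat.floor_natCast]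
end

section
variable {r : ℕ} {p : Fin r → ℕ} [∀ i, Fact (p i).Prime]

lemma ctr_of_pair (hinj : Function.Injective p) {ψ : ℚ → ℝ} (hψ0 : ∀ γ, 0 ≤ ψ γ)
    (hψL : ∀ γ, ψ γ ≤ 1 / (2 * LP r p γ)) {x : QP r p} (hx : x ∈ ZP r p) {β γ : ℚ}
    (hp : CoprimePair r p β γ) (hd : dP r p (smulQ r p γ x) (iota r p β) ≤ ψ γ) :
    ∃ (n : ℕ) (z : ℚ), AA r p n γ ∧ β = z * γ ∧ Ctr r p n z ∧
      ∃ a : ℤ, z = a / n ∧ |a| ≤ 2 * n := by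
  obtain ⟨m, k, μ, ν, hβ, hγ, hm, hk, hmk⟩ := hp
  have hk0 : k ≠ 0 := by
    rintro rfl
    have hγ0 : γ = 0 := by rw [hγ]; simp
    subst hγ0
    have h1 := ((dP_iff (hψ0 0)).1 hd).1
    have h2 := psi_zero hψL
    have h3 : |(β : ℝ)| ≤ 0 := by
      have := h1.trans h2
      simpa using this
    have h4 : β = 0 := by simpa using h3
    rw [h4] at hβ
    have h5 := (mul_eq_zero.1 hβ.symm).resolve_right (prodz_ne μ)
    have h6 : m = 0 := by exact_mod_cast h5
    rw [h6, isCoprime_zero_left] at hmk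
    exact not_isUnit_zero hmk
  have hA : AA r p k.natAbs γ := ⟨by omega, k, ν, rfl, hγ, hk⟩
  have hγ0 := AA_ne hA
  have hn : 0 < k.natAbs := by omega
  have hnR : (0 : ℝ) < k.natAbs := by exact_mod_cast hn
  obtain ⟨hb0, hbi⟩ := psi_bd hinj hψL hA
  have hn1 : (1 : ℝ) ≤ k.natAbs := by exact_mod_cast hn
  have hd' := (dP_iff (hψ0 γ)).1 hd
  have hle : ∀ i, ν i ≤ μ i := by
    intro i
    have h1 : ‖(β : ℚ_[p i])‖ ≤ ‖(γ : ℚ_[p i])‖ := by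
      have e : (β : ℚ_[p i]) = γ * x.2 i + -(γ * x.2 i - β) := by ring
      rw [e]
      refine (Padic.nonarchimedean _ _).trans (max_le ?_ ?_)
      · rw [norm_mul]
        exact mul_le_of_le_one_right (norm_nonneg _) (hx.2 i)
      · rw [norm_neg]
        refine (hd'.2 i).trans ((hbi i).trans ?_)
        exact div_le_self (norm_nonneg _) (by linarith)
    rw [hβ, hγ, norm_dec hinj hm, norm_dec hinj hk] at h1
    have h2 : (1 : ℝ) < p i := by exact_mod_cast (Fact.out : (p i).Prime).one_lt
    have := (zpow_le_zpow_iff_right₀ h2).1 h1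
    omega
  have hsgn : (k : ℤ) = k.sign * k.natAbs := (Int.sign_mul_natAbs k).symm
  have hs : k.sign = 1 ∨ k.sign = -1 := by
    rcases lt_trichotomy k 0 with h | h | h
    · right; exact Int.sign_eq_neg_one_of_neg h
    · omega
    · left; exact Int.sign_eq_one_of_pos h
  set a : ℤ := k.sign * (m * ∏ i, (p i : ℤ) ^ (μ i - ν i).toNat) with ha
  have hβz : β = ((a : ℚ) / k.natAbs) * γ := by
    have e1 : (k : ℚ) = k.sign * k.natAbs := by
      have := congrArg (Int.cast : ℤ → ℚ) hsgn
      rwa [Int.cast_mul, Int.cast_natCast] at this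
    have hn0 : (k.natAbs : ℚ) ≠ 0 := by exact_mod_cast hn.ne'
    have e2 : (k.sign : ℚ) * k.sign = 1 := by rcases hs with h | h <;> rw [h] <;> norm_num
    have e3 : ∏ i, (p i : ℚ) ^ μ i = (∏ i, (p i : ℚ) ^ (μ i - ν i).toNat) * ∏ i, (p i : ℚ) ^ ν i := by
      rw [← Finset.prod_mul_distrib]
      refine Finset.prod_congr rfl fun i _ => ?_
      rw [← zpow_natCast, ← zpow_add₀ (pp_ne i), Int.toNat_of_nonneg (by linarith [hle i])]
      congr 1; ring
    rw [hβ, hγ, e3, ha]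
    conv_rhs => enter [2, 1]; rw [e1]
    push_cast
    field_simp
    linear_combination (-(m : ℚ) * (∏ i, (p i : ℚ) ^ (μ i - ν i).toNat) * ∏ i, (p i : ℚ) ^ ν i) * e2
  have hcopQ : (k.natAbs).Coprime (QQ r p) := by
    unfold QQ
    refine Nat.Coprime.prod_right fun i _ => Nat.Coprime.symm ?_
    rw [Nat.Prime.coprime_iff_not_dvd Fact.out]
    intro h
    exact hk i (Int.natCast_dvd.2 h)
  have hcopa : IsCoprime a (k.natAbs : ℤ) := by
    have hmk' : IsCoprime m (k.natAbs : ℤ) :=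
      hmk.of_isCoprime_of_dvd_right (Int.natAbs_dvd.2 dvd_rfl)
    have h2 : IsCoprime (∏ i, (p i : ℤ) ^ (μ i - ν i).toNat) (k.natAbs : ℤ) := by
      refine IsCoprime.prod_left fun i _ => IsCoprime.pow_left ?_
      exact Nat.isCoprime_iff_coprime.2 (hcopQ.symm.of_dvd_left (dvd_QQ r p i))
    have h3 := hmk'.mul_left h2
    rw [ha]
    rcases hs with h | h
    · rw [h, one_mul]; exact h3
    · rw [h, neg_one_mul]; exact h3.neg_left
  refine ⟨k.natAbs, a / k.natAbs, hA, hβz, ⟨hn, hcopQ, a, 0, hcopa, by simp⟩, a, rfl, ?_⟩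
  rw [hβz, dP_iff' hγ0 (hψ0 γ)] at hd
  have h1 := hd.1
  have hγR : 0 < |(γ : ℝ)| := by simpa using hγ0
  have h2 : ψ γ / |(γ : ℝ)| ≤ 1 := by
    rw [div_le_one hγR]
    exact hb0.trans (div_le_self (abs_nonneg _) (by linarith))
  have h3 := abs_le.1 (h1.trans h2)
  have h4 : |((a : ℝ) / k.natAbs)| ≤ 2 := by
    push_cast at h3
    rw [abs_le]
    have := hx.1.1
    have := hx.1.2
    constructor <;> linarith
  rw [abs_div, Nat.abs_cast, div_le_iff₀ hnR] at h4
  have h5 : ((|a| : ℤ) : ℝ) ≤ ((2 * (k.natAbs : ℤ) : ℤ) : ℝ) := by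
    rw [Int.cast_abs, Int.cast_mul 2, Int.cast_natCast, Int.cast_ofNat]
    exact h4
  exact Int.cast_le.1 h5

lemma finite_bdd (hinj : Function.Injective p) (B : ℝ) :
    {γ : ℚ | (∃ n, AA r p n γ) ∧ |(γ : ℝ)| ≤ B ∧ ∀ i, ‖(γ : ℚ_[p i])‖ ≤ B}.Finite := by
  obtain ⟨K, hK⟩ := exists_nat_ge B
  have hQR : (0 : ℝ) < (QQ r p : ℝ) ^ K := pow_pos (by exact_mod_cast QQ_pos r p) _
  refine ((finite_Icc (-(⌈B * (QQ r p : ℝ) ^ K⌉)) (⌈B * (QQ r p : ℝ) ^ K⌉)).image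
    (fun j : ℤ => (j : ℚ) / (QQ r p : ℚ) ^ K)).subset ?_
  rintro γ ⟨⟨n, hA⟩, h1, h2⟩
  have hA' := hA
  obtain ⟨h0, m, ν, hmn, hγ, hm⟩ := hA
  have hν : ∀ i, 0 ≤ ν i + K := by
    intro i
    have h3 := h2 i
    rw [hγ, norm_dec hinj hm] at h3
    by_contra hneg
    obtain ⟨t, ht⟩ : ∃ t : ℕ, -ν i = t := ⟨(-ν i).toNat, by omega⟩
    rw [ht, zpow_natCast] at h3
    have h4 : (t : ℝ) < (p i : ℝ) ^ t := by
      exact_mod_cast Nat.lt_pow_self (Fact.out : (p i).Prime).one_lt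
    have h5 : (t : ℝ) < K := by linarith
    have h6 : t < K := by exact_mod_cast h5
    omega
  have e : γ * (QQ r p : ℚ) ^ K = ((m * ∏ i, (p i : ℤ) ^ (ν i + K).toNat : ℤ) : ℚ) := by
    rw [hγ, QQ]
    push_cast
    rw [← Finset.prod_pow, mul_assoc, ← Finset.prod_mul_distrib]
    congr 1
    refine Finset.prod_congr rfl fun i _ => ?_
    rw [← zpow_natCast, ← zpow_natCast, ← zpow_add₀ (pp_ne i), Int.toNat_of_nonneg (hν i)]
  set j : ℤ := m * ∏ i, (p i : ℤ) ^ (ν i + K).toNat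
  refine ⟨j, ?_, ?_⟩
  · have e' : (j : ℝ) = γ * (QQ r p : ℝ) ^ K := by
      exact_mod_cast (congrArg (Rat.cast : ℚ → ℝ) e).symm
    have h3 : |(j : ℝ)| ≤ ⌈B * (QQ r p : ℝ) ^ K⌉ := by
      rw [e', abs_mul, abs_of_pos hQR]
      exact (mul_le_mul_of_nonneg_right h1 hQR.le).trans (Int.le_ceil _)
    have h4 : |j| ≤ ⌈B * (QQ r p : ℝ) ^ K⌉ := by exact_mod_cast h3
    exact abs_le.1 h4
  · have := QQ_ne r p
    simp only [← e]
    field_simp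

lemma finite_z (hinj : Function.Injective p) {ψ : ℚ → ℝ} (hψ0 : ∀ γ, 0 ≤ ψ γ)
    (hψL : ∀ γ, ψ γ ≤ 1 / (2 * LP r p γ)) {x : QP r p} (z : ℚ)
    (hx0 : x.1 ≠ z) (hxi : ∀ i, x.2 i ≠ z) (N : ℕ) :
    {γ : ℚ | ∃ n < N, AA r p n γ ∧ dP r p (smulQ r p γ x) (iota r p (z * γ)) ≤ ψ γ}.Finite := by
  obtain ⟨δ, hδ, hδ0, hδi⟩ : ∃ δ > 0, δ ≤ |x.1 - z| ∧ ∀ i, δ ≤ ‖x.2 i - z‖ := by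
    have h1 : ∀ᶠ δ in 𝓝[>] (0 : ℝ), 0 < δ ∧ δ ≤ |x.1 - z| ∧ ∀ i, δ ≤ ‖x.2 i - z‖ := by
      refine (eventually_mem_nhdsWithin).and (Filter.Eventually.and ?_ (eventually_all.2 fun i => ?_))
      · exact nhdsWithin_le_nhds (Iic_mem_nhds (abs_pos.2 (sub_ne_zero.2 hx0)))
      · exact nhdsWithin_le_nhds (Iic_mem_nhds (norm_pos_iff.2 (sub_ne_zero.2 (hxi i))))
    obtain ⟨δ, h⟩ := h1.exists
    exact ⟨δ, h.1, h.2.1, h.2.2⟩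
  refine (finite_bdd hinj (N / δ)).subset ?_
  rintro γ ⟨n, hn, hA, hd⟩
  have hγ := AA_ne hA
  rw [dP_iff' hγ (hψ0 γ)] at hd
  obtain ⟨hb0, hbi⟩ := psi_bd hinj hψL hA
  have hn1 : (1 : ℝ) ≤ n := by exact_mod_cast hA.1
  have hγR : 0 < |(γ : ℝ)| := by simpa using hγ
  have hb0' : ψ γ ≤ |(γ : ℝ)| := hb0.trans (div_le_self (abs_nonneg _) (by linarith))
  have hbi' : ∀ i, ψ γ ≤ ‖(γ : ℚ_[p i])‖ := fun i =>
    (hbi i).trans (div_le_self (norm_nonneg _) (by linarith))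
  have hpow : ψ γ ^ (r + 1) ≤ n := by
    rw [← AA_prod hinj hA, pow_succ']
    refine mul_le_mul hb0' ?_ (pow_nonneg (hψ0 γ) _) (abs_nonneg _)
    have := Finset.prod_le_prod (s := Finset.univ) (f := fun _ : Fin r => ψ γ)
      (g := fun i => ‖(γ : ℚ_[p i])‖) (fun i _ => hψ0 γ) (fun i _ => hbi' i)
    simpa using this
  have hnN : (n : ℝ) ≤ N := by exact_mod_cast hn.le
  have hψN : ψ γ ≤ N := by
    by_contra hc
    push Not at hc
    have : ψ γ ≤ ψ γ ^ (r + 1) := le_self_pow₀ (by linarith) (by omega)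
    linarith
  refine ⟨⟨n, hA⟩, ?_, fun i => ?_⟩
  · rw [le_div_iff₀ hδ]
    have := hδ0.trans hd.1
    rw [le_div_iff₀ hγR] at this
    linarith
  · rw [le_div_iff₀ hδ]
    have := (hδi i).trans (hd.2 i)
    rw [le_div_iff₀ (npos i hγ)] at this
    linarith

lemma Epsi_sub (hinj : Function.Injective p) {ψ : ℚ → ℝ} (hψ0 : ∀ γ, 0 ≤ ψ γ)
    (hψL : ∀ γ, ψ γ ≤ 1 / (2 * LP r p γ)) {x : QP r p}
    (hx0 : ∀ z : ℚ, x.1 ≠ z) (hxi : ∀ i, ∀ z : ℚ, x.2 i ≠ z) (hx : x ∈ Epsi r p ψ) :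
    x ∈ Wpsi r p ψ := by
  by_contra hW
  simp only [Wpsi, WW, mem_ofPred_eq, not_frequently, eventually_atTop] at hW
  obtain ⟨N, hN⟩ := hW
  obtain ⟨hxZ, hinf⟩ := hx
  let F : Set ℚ := (fun an : ℤ × ℕ => (an.1 : ℚ) / an.2) '' (Icc (-(2 * N : ℤ)) (2 * N) ×ˢ Iio N)
  have hF : F.Finite := ((finite_Icc _ _).prod (finite_Iio N)).image _
  refine hinf ((hF.biUnion fun z _ =>
    (finite_z hinj hψ0 hψL z (hx0 z) (fun i => hxi i z) N).image fun γ => (z * γ, γ)).subset ?_)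
  rintro ⟨β, γ⟩ ⟨-, -, hp, hd⟩
  obtain ⟨n, z, hA, hβ, hz, a, hza, ha⟩ := ctr_of_pair hinj hψ0 hψL hxZ hp hd
  dsimp only at hβ hd hA
  rw [hβ] at hd ⊢
  have hnN : n < N := by
    by_contra hc
    refine hN n (not_lt.1 hc) ⟨mem_univ _, γ, z, hA, hz, ?_⟩
    simpa using (dP_iff' (AA_ne hA) (hψ0 γ)).1 hd
  refine mem_iUnion₂.2 ⟨z, ⟨(a, n), ⟨?_, hnN⟩, hza.symm⟩, γ, ⟨n, hnN, hA, hd⟩, rfl⟩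
  have := abs_le.1 ha
  constructor <;> simp only <;> omega

lemma ae_irr : ∀ᵐ x : QP r p ∂(lamP r p), (∀ z : ℚ, x.1 ≠ z) ∧ ∀ i, ∀ z : ℚ, x.2 i ≠ z := by
  refine Filter.Eventually.and (ae_all_iff.2 fun z => ?_) (ae_all_iff.2 fun i => ae_all_iff.2 fun z => ?_)
  · have : lamP r p (({(z : ℝ)} : Set ℝ) ×ˢ univ) = 0 := by
      unfold lamP
      rw [Measure.prod_prod]; simp
    refine measure_mono_null ?_ this
    intro x hx
    simpa using hx
  · have : lamP r p ((univ : Set ℝ) ×ˢ {f : (i : Fin r) → ℚ_[p i] | f i = z}) = 0 := by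
      unfold lamP
      rw [Measure.prod_prod, Measure.pi_hyperplane]; simp
    refine measure_mono_null ?_ this
    intro x hx
    simpa using hx

lemma lamP_ZP : lamP r p (ZP r p) = 1 := by
  have : ZP r p = Ico (0 : ℝ) 1 ×ˢ (Set.pi univ fun i => Metric.closedBall (0 : ℚ_[p i]) 1) := by
    ext x
    simp [ZP]
  rw [this]
  unfold lamP
  rw [Measure.prod_prod, Measure.pi_pi]
  simp [padicHaar_unit]

end

/-- **The zero-one law.** For `ψ : P⁻¹ℤ → ℝ_{≥0}` with `ψ(γ) ≤ 1/(2L(γ))`, the set `ℰ(ψ)`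
of `x ∈ ℤ_P` with `d(γ·x, ι(β)) ≤ ψ(γ)` for infinitely many coprime pairs `β, γ ∈ P⁻¹ℤ`
has measure `0` or `1`. -/
theorem diagonal_zero_one_law (r : ℕ) (p : Fin r → ℕ)
    [∀ i, Fact (p i).Prime] (hinj : Function.Injective p)
    (ψ : ℚ → ℝ) (hψ0 : ∀ γ, 0 ≤ ψ γ) (hψL : ∀ γ, ψ γ ≤ 1 / (2 * LP r p γ)) :
    lamP r p (Epsi r p ψ) = 0 ∨ lamP r p (Epsi r p ψ) = 1 := by
  have h := abstract_zero_one (r := r) (p := p) (A := AA r p) (ρ0 := fun γ => ψ γ / |(γ : ℝ)|)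
    (ρ := fun i γ => ψ γ / ‖(γ : ℚ_[p i])‖) hinj
    (fun n γ _ => div_nonneg (hψ0 γ) (abs_nonneg _)) (by
      intro n γ hA
      have hn : (0 : ℝ) < n := by exact_mod_cast hA.1
      have hγR : 0 < |(γ : ℝ)| := by simpa using AA_ne hA
      rw [div_le_iff₀ hγR]
      refine (psi_bd hinj hψL hA).1.trans ?_
      rw [div_le_iff₀ (by positivity)]
      have : 1 / (n : ℝ) * |(γ : ℝ)| * (2 * n) = 2 * |(γ : ℝ)| := by field_simp
      linarith)
  change lamP r p (Wpsi r p ψ) = 0 ∨ lamP r p (Wpsi r p ψ)ᶜ = 0 at h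
  have hirr := ae_irr (r := r) (p := p)
  have hdiff : lamP r p (Epsi r p ψ \ Wpsi r p ψ) = 0 := by
    refine measure_mono_null ?_ hirr
    intro x hx hx'
    exact hx.2 (Epsi_sub hinj hψ0 hψL hx'.1 hx'.2 hx.1)
  rcases h with h | h
  · left
    refine measure_mono_null ?_ (measure_union_null h hdiff)
    intro x hx
    by_cases hW : x ∈ Wpsi r p ψ
    · exact Or.inl hW
    · exact Or.inr ⟨hx, hW⟩
  · right
    refine le_antisymm ?_ ?_
    · rw [← lamP_ZP (r := r) (p := p)]
      exact measure_mono fun x hx => hx.1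
    · rw [← lamP_ZP (r := r) (p := p)]
      have hsub : ZP r p ⊆ Epsi r p ψ ∪ (Wpsi r p ψ)ᶜ := by
        intro x hx
        by_cases hW : x ∈ Wpsi r p ψ
        · exact Or.inl (Wpsi_sub hinj hψ0 ⟨hW, hx⟩)
        · exact Or.inr hW
      refine (measure_mono hsub).trans ((measure_union_le _ _).trans ?_)
      rw [h, add_zero]
end

section
/- Let q be a prime with q > p_1 ⋯ p_r and let s be an integer. Let T : ℤ_P → ℤ_P be the map x ↦ (q/(p_1 ⋯ p_r)) x + s p_1 ⋯ p_r / q reef reduced modulo ι(P⁻¹ℤ) (i.e. composed with the projection of ℚ_P onto the fundamental domain ℤ_P for the lattice ι(P⁻¹ℤ)). Then T is metrically transitive on ℤ_P: every measurable set A ⊆ ℤ_P with T(A) ⊆ A has λ(A) = 0 or λ(A) = 1. -/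
open MeasureTheory Filter Set

namespace MT

instance (q : ℕ) [Fact q.Prime] : (padicHaar q).IsAddHaarMeasure := by
  unfold padicHaar; infer_instance

instance (r : ℕ) (p : Fin r → ℕ) [∀ i, Fact (p i).Prime] : (lamP r p).IsAddHaarMeasure := by
  unfold lamP; infer_instance

lemma pinv_iff (r : ℕ) (p : Fin r → ℕ) [∀ i, Fact (p i).Prime] (g : ℚ) :
    g ∈ PinvZ r p ↔ ∃ (k : ℕ) (m : ℤ), g * (∏ i, (p i : ℚ)) ^ k = m := by
  have hp : ∀ i, (p i : ℚ) ≠ 0 := fun i => by exact_mod_cast (Fact.out : (p i).Prime).ne_zero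
  constructor
  · rintro ⟨n, ν, rfl⟩
    refine ⟨∑ i, (ν i).natAbs,
      n * ∏ i, (p i : ℤ) ^ (ν i + (∑ i, (ν i).natAbs : ℕ)).toNat, ?_⟩
    have hgen : ∀ t : ℕ, (∀ i, (ν i).natAbs ≤ t) → (n : ℚ) * (∏ i, (p i : ℚ) ^ ν i) *
        (∏ i, (p i : ℚ)) ^ t = ((n * ∏ i, (p i : ℤ) ^ (ν i + (t : ℤ)).toNat : ℤ) : ℚ) := ?_
    · exact hgen _ fun i => Finset.single_le_sum (f := fun i => (ν i).natAbs)
        (fun _ _ => Nat.zero_le _) (Finset.mem_univ i)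
    intro t ht
    push_cast
    rw [mul_assoc, ← Finset.prod_pow, ← Finset.prod_mul_distrib]
    congr 1
    refine Finset.prod_congr rfl fun i _ => ?_
    have h1 := ht i
    rw [← zpow_natCast, ← zpow_natCast, ← zpow_add₀ (hp i)]
    congr 1
    omega
  · rintro ⟨k, m, h⟩
    refine ⟨m, fun _ => -(k : ℤ), ?_⟩
    rw [← h]
    have : (∏ i, (p i : ℚ)) ^ k ≠ 0 := pow_ne_zero _ (Finset.prod_ne_zero_iff.2 fun i _ => hp i)
    simp only [zpow_neg, zpow_natCast, Finset.prod_inv_distrib, Finset.prod_pow]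
    field_simp

lemma pinv_step (r : ℕ) (p : Fin r → ℕ) [∀ i, Fact (p i).Prime] (q : ℕ) {g h : ℚ}
    (hg : g ∈ PinvZ r p) (hh : h ∈ PinvZ r p) :
    (q : ℚ) / (∏ i, (p i : ℚ)) * g + h ∈ PinvZ r p := by
  rw [pinv_iff] at *
  obtain ⟨k, m, h1⟩ := hg
  obtain ⟨l, n, h2⟩ := hh
  have hN : (∏ i, (p i : ℚ)) ≠ 0 := Finset.prod_ne_zero_iff.2 fun i _ => by
    exact_mod_cast (Fact.out : (p i).Prime).ne_zero
  refine ⟨k + l + 1, q * m * (∏ i, (p i : ℤ)) ^ l + n * (∏ i, (p i : ℤ)) ^ (k + 1), ?_⟩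
  push_cast
  rw [← h1, ← h2]
  field_simp
  ring

lemma pinv_sub (r : ℕ) (p : Fin r → ℕ) [∀ i, Fact (p i).Prime] {g h : ℚ}
    (hg : g ∈ PinvZ r p) (hh : h ∈ PinvZ r p) : g - h ∈ PinvZ r p := by
  rw [pinv_iff] at *
  obtain ⟨k, m, h1⟩ := hg
  obtain ⟨l, n, h2⟩ := hh
  refine ⟨k + l, m * (∏ i, (p i : ℤ)) ^ l - n * (∏ i, (p i : ℤ)) ^ k, ?_⟩
  push_cast
  rw [← h1, ← h2]
  ring

lemma pinv_small (r : ℕ) (p : Fin r → ℕ) [∀ i, Fact (p i).Prime] {g : ℚ}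
    (hg : g ∈ PinvZ r p) (h1 : |(g : ℝ)| < 1) (h2 : ∀ i, ‖(g : ℚ_[p i])‖ ≤ 1) : g = 0 := by
  rw [pinv_iff] at hg
  obtain ⟨k, m, h⟩ := hg
  have hdvd : g.den ∣ (∏ i, p i) ^ k := by
    have h3 : (g.num : ℚ) * (∏ i, (p i : ℚ)) ^ k = m * g.den := by
      rw [← h, ← Rat.mul_den_eq_num g]; ring
    have h4 : g.num * (∏ i, (p i : ℤ)) ^ k = m * g.den := by exact_mod_cast h3
    have h5 : (g.den : ℤ) ∣ g.num * (∏ i, (p i : ℤ)) ^ k := ⟨m, by rw [h4]; ring⟩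
    have h6 : IsCoprime (g.den : ℤ) g.num := by
      rw [Int.isCoprime_iff_gcd_eq_one]
      exact g.reduced.symm
    have := h6.dvd_of_dvd_mul_left h5
    exact_mod_cast this
  have hnd : ∀ i, ¬ p i ∣ g.den := by
    intro i hi
    have e : (g : ℚ_[p i]) * (g.den : ℚ_[p i]) = (g.num : ℚ_[p i]) := by
      exact_mod_cast congrArg (fun x : ℚ => (x : ℚ_[p i])) (Rat.mul_den_eq_num g)
    have a1 : ‖(g.den : ℚ_[p i])‖ < 1 := by
      have := (Padic.norm_intCast_lt_one_iff (p := p i) (k := (g.den : ℤ))).2 (by exact_mod_cast hi)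
      simpa using this
    have a2 : ‖(g.num : ℚ_[p i])‖ < 1 := by
      rw [← e, norm_mul]
      calc _ ≤ 1 * ‖(g.den : ℚ_[p i])‖ := by gcongr; exact h2 i
        _ < 1 := by simpa using a1
    have a3 := Padic.norm_intCast_lt_one_iff.1 a2
    have a4 : p i ∣ g.num.natAbs := by exact Int.natCast_dvd.1 a3
    have := Nat.dvd_gcd a4 hi
    rw [g.reduced] at this
    exact (Fact.out : (p i).Prime).one_lt.ne' (Nat.dvd_one.1 this)
  have hden : g.den = 1 := by
    have : Nat.Coprime g.den ((∏ i, p i) ^ k) := by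
      apply Nat.Coprime.pow_right
      apply Nat.Coprime.prod_right
      intro i _
      exact (((Fact.out : (p i).Prime).coprime_iff_not_dvd).2 (hnd i)).symm
    exact Nat.Coprime.eq_one_of_dvd this hdvd
  have hz : g = g.num := (Rat.den_eq_one_iff g).1 hden |>.symm
  rw [hz] at h1 ⊢
  have : |g.num| < 1 := by exact_mod_cast h1
  simp [Int.abs_lt_one_iff.1 this]

/-- Multiplication by a nonzero rational as a topological automorphism. -/
noncomputable def mulE (r : ℕ) (p : Fin r → ℕ) [∀ i, Fact (p i).Prime] (γ : ℚ) (hγ : γ ≠ 0) :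
    QP r p ≃ₜ+ QP r p where
  toFun := smulQ r p γ
  invFun := smulQ r p γ⁻¹
  left_inv x := by
    have : ∀ i, (γ : ℚ_[p i]) ≠ 0 := fun i => by exact_mod_cast hγ
    have : (γ : ℝ) ≠ 0 := by exact_mod_cast hγ
    ext <;> simp [smulQ, *]
  right_inv x := by
    have : ∀ i, (γ : ℚ_[p i]) ≠ 0 := fun i => by exact_mod_cast hγ
    have : (γ : ℝ) ≠ 0 := by exact_mod_cast hγ
    ext <;> simp [smulQ, *]
  map_add' x y := by ext <;> simp [smulQ, mul_add]
  continuous_toFun := by unfold smulQ; fun_prop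
  continuous_invFun := by unfold smulQ; fun_prop

lemma zp_meas (r : ℕ) (p : Fin r → ℕ) [∀ i, Fact (p i).Prime] :
    MeasurableSet (ZP r p) ∧ lamP r p (ZP r p) = 1 := by
  have e : ZP r p = (Set.Ico (0 : ℝ) 1) ×ˢ (Set.univ.pi fun i => Metric.closedBall (0 : ℚ_[p i]) 1) := by
    ext x; simp [ZP]
  rw [e]
  constructor
  · exact measurableSet_Ico.prod
      (MeasurableSet.univ_pi fun i => Metric.isClosed_closedBall.measurableSet)
  · rw [lamP, Measure.prod_prod, Measure.pi_pi]
    have : ∀ i, padicHaar (p i) (Metric.closedBall (0 : ℚ_[p i]) 1) = 1 := fun i => by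
      unfold padicHaar
      exact Measure.addHaarMeasure_self (K₀ := ⟨⟨Metric.closedBall (0 : ℚ_[p i]) 1, isCompact_closedBall 0 1⟩,
      ⟨0, mem_interior_iff_mem_nhds.2 (Metric.closedBall_mem_nhds 0 one_pos)⟩⟩)
    simp [this]

lemma cover (r : ℕ) (p : Fin r → ℕ) [∀ i, Fact (p i).Prime] (A : Set (QP r p))
    (hAm : MeasurableSet A) (w c : QP r p) :
    lamP r p {z | z - w ∈ ZP r p ∧ ∃ g ∈ PinvZ r p, z + c - iota r p g ∈ A} ≤ lamP r p A := by
  let B : PinvZ r p → Set (QP r p) := fun g => A ∩ {a | a - c + iota r p g - w ∈ ZP r p}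
  have hZ := (zp_meas r p).1
  have hBm : ∀ g, MeasurableSet (B g) := fun g =>
    hAm.inter (measurableSet_preimage (f := fun a => a - c + iota r p g - w) (by fun_prop) hZ)
  have hBd : Pairwise (Function.onFun Disjoint B) := by
    intro g h hgh
    rw [Function.onFun, Set.disjoint_left]
    rintro a ⟨_, ha⟩ ⟨_, hb⟩
    apply hgh
    apply Subtype.ext
    rw [← sub_eq_zero]
    apply pinv_small r p (pinv_sub r p g.2 h.2)
    · have h1 := ha.1
      have h2 := hb.1
      simp only [iota, Prod.fst_sub, Prod.fst_add, Set.mem_Ico] at h1 h2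
      push_cast
      rw [abs_lt]
      constructor <;> linarith [h1.1, h1.2, h2.1, h2.2]
    · intro i
      have h1 := ha.2 i
      have h2 := hb.2 i
      simp only [iota, Prod.snd_sub, Prod.snd_add, Pi.sub_apply, Pi.add_apply] at h1 h2
      have := Padic.nonarchimedean (a.2 i - c.2 i + ((g : ℚ) : ℚ_[p i]) - w.2 i)
        (-(a.2 i - c.2 i + ((h : ℚ) : ℚ_[p i]) - w.2 i))
      rw [norm_neg] at this
      refine le_trans (le_of_eq ?_) (this.trans (max_le h1 h2))
      congr 1
      push_cast
      ring
  calc _ ≤ lamP r p (⋃ g : PinvZ r p, (fun z => z + (c - iota r p g)) ⁻¹' (B g)) := by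
        apply measure_mono
        rintro z ⟨hz, g, hg, hga⟩
        refine Set.mem_iUnion.2 ⟨⟨g, hg⟩, ?_, ?_⟩
        · convert hga using 1
          simp only
          abel
        · simp only [Set.mem_ofPred_eq]
          convert hz using 1
          abel
    _ ≤ ∑' g : PinvZ r p, lamP r p ((fun z => z + (c - iota r p g)) ⁻¹' (B g)) :=
        measure_iUnion_le _
    _ = ∑' g : PinvZ r p, lamP r p (B g) := by
        simp only [measure_preimage_add_right]
    _ = lamP r p (⋃ g, B g) := (measure_iUnion hBd hBm).symm
    _ ≤ lamP r p A := measure_mono (Set.iUnion_subset fun g => Set.inter_subset_left)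

lemma iter (r : ℕ) (p : Fin r → ℕ) [∀ i, Fact (p i).Prime]
    (q : ℕ) (s : ℤ)
    (T : QP r p → QP r p)
    (hT : ∀ x ∈ ZP r p, T x ∈ ZP r p ∧
      ∃ g ∈ PinvZ r p,
        T x = smulQ r p ((q : ℚ) / ∏ i, (p i : ℚ)) x
            + iota r p ((s : ℚ) * (∏ i, (p i : ℚ)) / (q : ℚ)) - iota r p g)
    (A : Set (QP r p)) (hA : A ⊆ ZP r p) (hTA : T '' A ⊆ A) (n : ℕ) :
    ∃ c : QP r p, ∀ a ∈ A, ∃ g ∈ PinvZ r p,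
      smulQ r p (((q : ℚ) / ∏ i, (p i : ℚ)) ^ n) a + c - iota r p g ∈ A := by
  induction n with
  | zero =>
    refine ⟨0, fun a ha => ⟨0, ⟨0, 0, by simp⟩, ?_⟩⟩
    convert ha using 1
    ext <;> simp [smulQ, iota]
  | succ n ih =>
    obtain ⟨c, hc⟩ := ih
    refine ⟨smulQ r p ((q : ℚ) / ∏ i, (p i : ℚ)) c
      + iota r p ((s : ℚ) * (∏ i, (p i : ℚ)) / (q : ℚ)), fun a ha => ?_⟩
    obtain ⟨g, hg, hga⟩ := hc a ha
    obtain ⟨-, h, hh, e⟩ := hT _ (hA hga)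
    have hm := hTA ⟨_, hga, rfl⟩
    rw [e] at hm
    refine ⟨_, pinv_step r p q hg hh, ?_⟩
    convert hm using 1
    ext <;> simp [smulQ, iota] <;> ring

lemma tonelli (r : ℕ) (p : Fin r → ℕ) [∀ i, Fact (p i).Prime] (K D : Set (QP r p))
    (hK : MeasurableSet K) (hD : MeasurableSet D) :
    ∫⁻ x, lamP r p (K ∩ {y | y - x ∈ D}) ∂(lamP r p) = lamP r p K * lamP r p D := by
  have hS : MeasurableSet {z : QP r p × QP r p | z.2 ∈ K ∧ z.2 - z.1 ∈ D} :=
    (measurable_snd hK).inter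
      (measurableSet_preimage (f := fun z : QP r p × QP r p => z.2 - z.1) (by fun_prop) hD)
  have h1 := Measure.prod_apply (μ := lamP r p) (ν := lamP r p) hS
  have h2 := Measure.prod_apply_symm (μ := lamP r p) (ν := lamP r p) hS
  rw [h1] at h2
  refine Eq.trans ?_ (h2.trans ?_)
  · rfl
  · have : ∀ y, lamP r p ((fun x => (x, y)) ⁻¹' {z : QP r p × QP r p | z.2 ∈ K ∧ z.2 - z.1 ∈ D})
        = K.indicator (fun _ => lamP r p D) y := by
      intro y
      by_cases hy : y ∈ K
      · have e : ((fun x => (x, y)) ⁻¹' {z : QP r p × QP r p | z.2 ∈ K ∧ z.2 - z.1 ∈ D})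
          = (fun x => y - x) ⁻¹' D := by ext x; simp [hy]
        rw [e, Set.indicator_of_mem hy]
        exact (Measure.measurePreserving_sub_left (lamP r p) y).measure_preimage hD.nullMeasurableSet
      · simp [hy]
    simp only [this]
    rw [lintegral_indicator hK]
    simp [mul_comm]

lemma key (r : ℕ) (p : Fin r → ℕ) [∀ i, Fact (p i).Prime] (γ : ℚ) (hγ : γ ≠ 0)
    (A : Set (QP r p)) (hAm : MeasurableSet A) (c : QP r p)
    (h : ∀ a ∈ A, ∃ g ∈ PinvZ r p, smulQ r p γ a + c - iota r p g ∈ A)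
    (K U : Set (QP r p)) (hK : MeasurableSet K) (hKA : K ⊆ A) (hU : MeasurableSet U)
    (hKU : ∀ y ∈ K, ∀ d, smulQ r p γ d ∈ ZP r p → y - d ∈ U) :
    lamP r p K ≤ lamP r p U * lamP r p A := by
  set μ := lamP r p with hμ
  let e := mulE r p γ hγ
  have hem : Measurable e.symm := e.symm.continuous.measurable
  have : (μ.map e.symm).IsAddHaarMeasure := ContinuousAddEquiv.isAddHaarMeasure_map μ e.symm
  obtain ⟨k, hk⟩ : ∃ k : NNReal, μ.map e.symm = k • μ :=
    ⟨_, Measure.isAddLeftInvariant_eq_smul (μ.map e.symm) μ⟩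
  have hsc : ∀ E, MeasurableSet E → μ (e.symm ⁻¹' E) = k * μ E := fun E hE => by
    rw [← Measure.map_apply hem hE, hk, Measure.smul_apply, ENNReal.smul_def, smul_eq_mul]
  let D := e ⁻¹' ZP r p
  have hDm : MeasurableSet D := e.continuous.measurable (zp_meas r p).1
  have hD1 : k * μ D = 1 := by
    rw [← hsc D hDm, ← (zp_meas r p).2]
    congr 1
    ext x; simp [D]
  have hDK : ∀ x, MeasurableSet (K ∩ {y | y - x ∈ D}) := fun x =>
    hK.inter (measurableSet_preimage (f := fun y => y - x) (by fun_prop) hDm)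
  have hb : ∀ x, k * μ (K ∩ {y | y - x ∈ D}) ≤ U.indicator (fun _ => μ A) x := by
    intro x
    by_cases hx : x ∈ U
    · rw [Set.indicator_of_mem hx, ← hsc _ (hDK x)]
      refine le_trans (measure_mono ?_) (cover r p A hAm (e x) c)
      rintro z ⟨hz1, hz2⟩
      obtain ⟨y, rfl⟩ := e.surjective z
      simp only [Set.mem_ofPred_eq, ContinuousAddEquiv.symm_apply_apply] at hz1 hz2
      refine ⟨?_, h y (hKA hz1)⟩
      rw [← map_sub]
      exact hz2
    · rw [Set.indicator_of_notMem hx]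
      have : K ∩ {y | y - x ∈ D} = ∅ := by
        rw [Set.eq_empty_iff_forall_notMem]
        rintro y ⟨hy1, hy2⟩
        apply hx
        have := hKU y hy1 (y - x) hy2
        simpa using this
      simp [this]
  calc μ K = k * (μ K * μ D) := by rw [mul_left_comm, hD1, mul_one]
    _ = k * ∫⁻ x, μ (K ∩ {y | y - x ∈ D}) ∂μ := by rw [hμ, tonelli r p K D hK hDm]
    _ = ∫⁻ x, k * μ (K ∩ {y | y - x ∈ D}) ∂μ := (lintegral_const_mul' _ _ (by simp)).symm
    _ ≤ ∫⁻ x, U.indicator (fun _ => μ A) x ∂μ := lintegral_mono hb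
    _ = μ U * μ A := by rw [lintegral_indicator hU]; simp [mul_comm]

lemma small (r : ℕ) (p : Fin r → ℕ) [∀ i, Fact (p i).Prime] 
    (q : ℕ) (hq : q.Prime) (hq2 : ∏ i, p i < q) (δ : ℝ) (hδ : 0 < δ) :
    ∃ n : ℕ, ∀ d, smulQ r p (((q : ℚ) / ∏ i, (p i : ℚ)) ^ n) d ∈ ZP r p → ‖d‖ < δ := by
  set γ : ℚ := (q : ℚ) / ∏ i, (p i : ℚ) with hγ
  have hN : (∏ i, (p i : ℚ)) ≠ 0 := Finset.prod_ne_zero_iff.2 fun i _ => by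
    exact_mod_cast (Fact.out : (p i).Prime).ne_zero
  have hNpos : 0 < ∏ i, (p i : ℚ) := Finset.prod_pos fun i _ => by
    exact_mod_cast (Fact.out : (p i).Prime).pos
  have h1 : (1 : ℝ) < (γ : ℝ) := by
    have : (1 : ℚ) < γ := by
      rw [hγ, one_lt_div hNpos]; exact_mod_cast hq2
    exact_mod_cast this
  have h2 : ∀ i, (1 : ℝ) < ‖(γ : ℚ_[p i])‖ := by
    intro i
    have hi : p i ∣ ∏ i, p i := Finset.dvd_prod_of_mem _ (Finset.mem_univ i)
    have hle : p i < q := lt_of_le_of_lt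
      (Nat.le_of_dvd (Finset.prod_pos fun i _ => (Fact.out : (p i).Prime).pos) hi) hq2
    have a1 : ‖(q : ℚ_[p i])‖ = 1 := by
      rw [Padic.norm_natCast_eq_one_iff, Nat.coprime_primes Fact.out hq]
      exact hle.ne
    have a2 : ‖((∏ i, p i : ℕ) : ℚ_[p i])‖ < 1 := by
      have := (Padic.norm_intCast_lt_one_iff (p := p i) (k := ((∏ i, p i : ℕ) : ℤ))).2
        (by exact_mod_cast hi)
      simpa using this
    have a3 : (γ : ℚ_[p i]) * ((∏ i, p i : ℕ) : ℚ_[p i]) = (q : ℚ_[p i]) := by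
      have : γ * ((∏ i, p i : ℕ) : ℚ) = q := by
        rw [hγ]; push_cast; field_simp
      exact_mod_cast congrArg (fun x : ℚ => (x : ℚ_[p i])) this
    have a4 := congrArg norm a3
    rw [norm_mul, a1] at a4
    by_contra hcon
    push Not at hcon
    have : ‖(γ : ℚ_[p i])‖ * ‖((∏ i, p i : ℕ) : ℚ_[p i])‖ ≤
      1 * ‖((∏ i, p i : ℕ) : ℚ_[p i])‖ := by gcongr
    linarith
  have e1 : ∀ᶠ n : ℕ in atTop, 1 / δ < (γ : ℝ) ^ n :=
    (tendsto_pow_atTop_atTop_of_one_lt h1).eventually_gt_atTop _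
  have e2 : ∀ᶠ n : ℕ in atTop, ∀ i, 1 / δ < ‖(γ : ℚ_[p i])‖ ^ n :=
    eventually_all.2 fun i => (tendsto_pow_atTop_atTop_of_one_lt (h2 i)).eventually_gt_atTop _
  obtain ⟨n, hn1, hn2⟩ := (e1.and e2).exists
  have aux : ∀ a b : ℝ, 1 / δ < a → 0 ≤ b → a * b ≤ 1 → b < δ := by
    intro a b ha hb hab
    rw [div_lt_iff₀ hδ] at ha
    by_contra hc
    push Not at hc
    have : 0 < a := by
      by_contra h
      push Not at h
      nlinarith
    nlinarith
  refine ⟨n, fun d hd => ?_⟩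
  have d1 := hd.1
  have d2 := hd.2
  simp only [smulQ, Rat.cast_pow, norm_mul, norm_pow] at d1 d2
  rw [Prod.norm_def, max_lt_iff, pi_norm_lt_iff hδ]
  constructor
  · apply aux _ _ hn1 (norm_nonneg _)
    have : |(γ : ℝ) ^ n * d.1| ≤ 1 := by rw [abs_le]; constructor <;> linarith [d1.1, d1.2]
    rw [abs_mul, abs_of_pos (by positivity)] at this
    exact this
  · intro i
    exact aux _ _ (hn2 i) (norm_nonneg _) (d2 i)

end MT

/-- **Metric transitivity.** For a prime `q > p_1 ⋯ p_r` and `s ∈ ℤ`, the self-map `T` of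
`ℤ_P` given by `x ↦ (q/(p_1 ⋯ p_r)) x + s p_1 ⋯ p_r / q` reduced modulo `ι(P⁻¹ℤ)` is
metrically transitive: any measurable `A ⊆ ℤ_P` with `T(A) ⊆ A` has `λ(A) = 0` or `λ(A) = 1`. -/
theorem diagonal_metrically_transitive (r : ℕ) (p : Fin r → ℕ)
    [∀ i, Fact (p i).Prime] (hinj : Function.Injective p)
    (q : ℕ) (hq : q.Prime) (hq2 : ∏ i, p i < q) (s : ℤ)
    (T : QP r p → QP r p)
    (hT : ∀ x ∈ ZP r p, T x ∈ ZP r p ∧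
      ∃ g ∈ PinvZ r p,
        T x = smulQ r p ((q : ℚ) / ∏ i, (p i : ℚ)) x
            + iota r p ((s : ℚ) * (∏ i, (p i : ℚ)) / (q : ℚ)) - iota r p g)
    (A : Set (QP r p)) (hA : A ⊆ ZP r p) (hAm : MeasurableSet A) (hTA : T '' A ⊆ A) :
    lamP r p A = 0 ∨ lamP r p A = 1 := by
  rw [or_iff_not_imp_left]
  intro h0
  have hle : lamP r p A ≤ 1 := (measure_mono hA).trans_eq (MT.zp_meas r p).2
  refine le_antisymm hle ?_
  obtain ⟨K, hKA, hK, hK0⟩ := hAm.exists_lt_isCompact (μ := lamP r p) (pos_iff_ne_zero.2 h0)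
  have hKfin : lamP r p K ≠ ⊤ := hK.measure_lt_top.ne
  by_contra hlt
  push Not at hlt
  have hstep : ∀ U, K ⊆ U → IsOpen U → lamP r p K ≤ lamP r p U * lamP r p A := by
    intro U hKU hU
    obtain ⟨δ, hδ, hth⟩ := hK.exists_thickening_subset_open hU hKU
    obtain ⟨n, hn⟩ := MT.small r p q hq hq2 δ hδ
    obtain ⟨c, hc⟩ := MT.iter r p q s T hT A hA hTA n
    have hγ : ((q : ℚ) / ∏ i, (p i : ℚ)) ^ n ≠ 0 := pow_ne_zero _ (div_ne_zero
      (by exact_mod_cast hq.ne_zero) (Finset.prod_ne_zero_iff.2 fun i _ => by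
        exact_mod_cast (Fact.out : (p i).Prime).ne_zero))
    refine MT.key r p _ hγ A hAm c hc K U hK.measurableSet hKA hU.measurableSet ?_
    intro y hy d hd
    apply hth
    rw [Metric.mem_thickening_iff]
    exact ⟨y, hy, by simpa [dist_eq_norm] using hn d hd⟩
  have hfin : lamP r p K ≤ lamP r p K * lamP r p A := by
    have h1 : lamP r p K / lamP r p A ≤ lamP r p K := by
      refine le_of_forall_gt fun t ht => ?_
      obtain ⟨U, hKU, hU, hUt⟩ := K.exists_isOpen_lt_of_lt t ht
      refine lt_of_le_of_lt ?_ hUt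
      exact ENNReal.div_le_of_le_mul (hstep U hKU hU)
    rwa [ENNReal.div_le_iff h0 (hle.trans_lt ENNReal.one_lt_top).ne] at h1
  have : lamP r p K * lamP r p A < lamP r p K * 1 :=
    ENNReal.mul_lt_mul_right hK0.ne' hKfin hlt
  rw [mul_one] at this
  exact absurd hfin (not_le.2 this)
end

section
/- Let N ∈ ℕ, and for each i = 1, …, r let n_i ∈ ℤ_{≥0} be the integer with p_i^{n_i} ≤ N < p_i^{n_i + 1}. Then the set Z_N = { ζ ∈ P⁻¹ℤ : ℓ(ζ) ≤ N, ζ ≥ 0 } has cardinality #Z_N = N p_1^{n_1} ⋯ p_r^{n_r} + 1. -/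
open MeasureTheory Filter Set

lemma aux_int (x : ℚ) (h : ∀ (q : ℕ) [Fact q.Prime], ‖(x : ℚ_[q])‖ ≤ 1) : x.den = 1 := by
  by_contra hd
  obtain ⟨q, hq, hqd⟩ := Nat.exists_prime_and_dvd hd
  haveI : Fact q.Prime := ⟨hq⟩
  have h1 := h q
  have hden : ‖(x.den : ℚ_[q])‖ < 1 := Padic.norm_natCast_lt_one_iff.2 hqd
  have hnum : ‖(x.num : ℚ_[q])‖ < 1 := by
    have hx : (x.num : ℚ_[q]) = (x : ℚ_[q]) * (x.den : ℚ_[q]) := by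
      have := Rat.mul_den_eq_num x
      exact_mod_cast congrArg (fun y : ℚ => (y : ℚ_[q])) this.symm
    rw [hx, norm_mul]
    calc _ ≤ 1 * ‖(x.den : ℚ_[q])‖ := by gcongr
      _ < 1 := by simpa using hden
  have h2 := Padic.norm_intCast_lt_one_iff.1 hnum
  have h3 : q ∣ x.num.natAbs := Int.natCast_dvd.1 h2
  have h4 := Nat.dvd_gcd h3 hqd
  rw [x.reduced.gcd_eq_one] at h4
  exact hq.one_lt.ne' (Nat.dvd_one.1 h4)

lemma aux_normD (r : ℕ) (p : Fin r → ℕ)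
    [∀ i, Fact (p i).Prime] (hinj : Function.Injective p) (n' : Fin r → ℕ) (i : Fin r) :
    ‖((∏ j, p j ^ (n' j) : ℕ) : ℚ_[p i])‖ = ((p i : ℝ) ^ (n' i))⁻¹ := by
  push_cast
  rw [norm_prod, Finset.prod_eq_single i]
  · simp
  · intro j _ hj
    rw [norm_pow]
    have : ‖(p j : ℚ_[p i])‖ = 1 := by
      rw [Padic.norm_natCast_eq_one_iff]
      exact (Nat.coprime_primes (Fact.out) (Fact.out)).2 (fun h => hj (hinj h).symm)
    simp [this]
  · simp

lemma aux_lev (r : ℕ) (p : Fin r → ℕ) [∀ i, Fact (p i).Prime] (N : ℕ) (x : ℚ) :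
    lev r p x ≤ (N : ℝ) ↔ |x| ≤ N ∧ ∀ i, ‖(x : ℚ_[p i])‖ ≤ (N : ℝ) := by
  unfold lev
  rw [max_le_iff]
  refine and_congr ?_ ?_
  · exact_mod_cast Iff.rfl
  · constructor
    · intro h i
      exact (le_ciSup (f := fun i => ‖(x : ℚ_[p i])‖) (Set.finite_range _).bddAbove i).trans h
    · intro h
      exact Real.iSup_le h (Nat.cast_nonneg _)

lemma aux_set (r : ℕ) (p : Fin r → ℕ)
    [∀ i, Fact (p i).Prime] (hinj : Function.Injective p)
    (N : ℕ) (n' : Fin r → ℕ)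
    (hn' : ∀ i, p i ^ (n' i) ≤ N ∧ N < p i ^ (n' i + 1)) :
    {ζ : ℚ | ζ ∈ PinvZ r p ∧ lev r p ζ ≤ (N : ℝ) ∧ 0 ≤ ζ}
      = (fun k : ℕ => (k : ℚ) / ((∏ i, p i ^ (n' i) : ℕ) : ℚ)) ''
        (Finset.range (N * ∏ i, p i ^ (n' i) + 1) : Set ℕ) := by
  have hp0 : ∀ i, 0 < p i := fun i => (Fact.out : (p i).Prime).pos
  have hD : 0 < ∏ i, p i ^ (n' i) := Finset.prod_pos fun i _ => pow_pos (hp0 i) _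
  have hnD := aux_normD r p hinj n'
  have hDe : ((∏ i, p i ^ (n' i) : ℕ) : ℚ) = ∏ i, (p i : ℚ) ^ (n' i) := by push_cast; rfl
  generalize hDD : (∏ i, p i ^ (n' i) : ℕ) = D at *
  have hDq : (0 : ℚ) < D := by exact_mod_cast hD
  ext x
  simp only [Set.mem_setOf_eq, Set.mem_image, Finset.coe_range, Set.mem_Iio, aux_lev]
  constructor
  · rintro ⟨⟨n, ν, hx⟩, ⟨hxN, hxp⟩, hx0⟩
    have hint : (x * D).den = 1 := by
      apply aux_int
      intro q hq
      by_cases h : ∃ i, p i = q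
      · obtain ⟨i, rfl⟩ := h
        have h1 : ‖(x : ℚ_[p i])‖ ≤ (p i : ℝ) ^ (n' i) := by
          have := (Padic.norm_le_pow_iff_norm_lt_pow_add_one (x : ℚ_[p i]) (n' i)).2
            ((hxp i).trans_lt (by exact_mod_cast (hn' i).2))
          simpa using this
        have hpp : (0 : ℝ) < (p i : ℝ) ^ (n' i) := pow_pos (by exact_mod_cast hp0 i) _
        push_cast
        rw [norm_mul]
        have := hnD i
        rw [this]
        rw [← div_eq_mul_inv, div_le_one hpp]
        exact h1
      · push Not at h
        have h1 : ‖(x : ℚ_[q])‖ ≤ 1 := by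
          rw [hx]
          push_cast
          rw [norm_mul, norm_prod, Finset.prod_eq_one, mul_one]
          · exact Padic.norm_int_le_one n
          · intro j _
            have : ‖(p j : ℚ_[q])‖ = 1 := by
              rw [Padic.norm_natCast_eq_one_iff]
              exact (Nat.coprime_primes (Fact.out) (Fact.out)).2 (h j).symm
            rw [norm_zpow, this, one_zpow]
        have h2 : ‖(D : ℚ_[q])‖ ≤ 1 := by exact_mod_cast Padic.norm_int_le_one (p := q) (D : ℤ)
        push_cast
        rw [norm_mul]
        exact mul_le_one₀ h1 (norm_nonneg _) h2
    have hnum : ((x * D).num : ℚ) = x * D := Rat.den_eq_one_iff _ |>.1 hint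
    have hnn : 0 ≤ (x * D).num := Rat.num_nonneg.2 (by positivity)
    obtain ⟨k, hk⟩ := Int.eq_ofNat_of_zero_le hnn
    rw [hk] at hnum
    have hk' : (k : ℚ) = x * D := by exact_mod_cast hnum
    refine ⟨k, ?_, ?_⟩
    · rw [Nat.lt_succ_iff]
      have : (k : ℚ) ≤ N * D := by
        rw [hk']
        exact mul_le_mul_of_nonneg_right ((le_abs_self x).trans hxN) hDq.le
      exact_mod_cast this
    · rw [hk']; field_simp
  · rintro ⟨k, hk, rfl⟩
    rw [Nat.lt_succ_iff] at hk
    have hk0 : (0 : ℚ) ≤ (k : ℚ) / D := by positivity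
    refine ⟨⟨k, fun i => -(n' i : ℤ), ?_⟩, ⟨?_, ?_⟩, hk0⟩
    · rw [hDe]
      simp [div_eq_mul_inv]
    · rw [abs_of_nonneg hk0, div_le_iff₀ hDq]
      exact_mod_cast hk
    · intro i
      push_cast
      rw [norm_div]
      have := hnD i
      rw [this, div_inv_eq_mul]
      have h2 : ‖(k : ℚ_[p i])‖ ≤ 1 := by
        exact_mod_cast Padic.norm_int_le_one (p := p i) (k : ℤ)
      have h3 : (p i : ℝ) ^ (n' i) ≤ N := by exact_mod_cast (hn' i).1
      have h4 : (0 : ℝ) ≤ (p i : ℝ) ^ (n' i) := by positivity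
      calc _ ≤ 1 * (p i : ℝ) ^ (n' i) := by gcongr
        _ ≤ N := by simpa using h3

/-- **Counting points of bounded level.** For `N ∈ ℕ` and `n_i` with
`p_i^{n_i} ≤ N < p_i^{n_i+1}`, the set `Z_N = {ζ ∈ P⁻¹ℤ : ℓ(ζ) ≤ N, ζ ≥ 0}` has exactly
`N p_1^{n_1} ⋯ p_r^{n_r} + 1` elements. -/
theorem card_level_le (r : ℕ) (p : Fin r → ℕ)
    [∀ i, Fact (p i).Prime] (hinj : Function.Injective p)
    (N : ℕ) (hN : 0 < N) (n' : Fin r → ℕ)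
    (hn' : ∀ i, p i ^ (n' i) ≤ N ∧ N < p i ^ (n' i + 1)) :
    {ζ : ℚ | ζ ∈ PinvZ r p ∧ lev r p ζ ≤ (N : ℝ) ∧ 0 ≤ ζ}.ncard
      = N * ∏ i, p i ^ (n' i) + 1 := by
  rw [aux_set r p hinj N n' hn', Set.ncard_image_of_injective, Set.ncard_coe_finset,
    Finset.card_range]
  have hD : 0 < ∏ i, p i ^ (n' i) :=
    Finset.prod_pos fun i _ => pow_pos (Fact.out : (p i).Prime).pos _
  intro a b hab
  have hDq : ((∏ i, p i ^ (n' i) : ℕ) : ℚ) ≠ 0 := by exact_mod_cast hD.ne'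
  have := (div_left_inj' hDq).1 hab
  exact_mod_cast this
end
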